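/- arXiv:gr-qc/0201091 — 2 statements merged into one kernel-verified Lean document; each statement's English description precedes it below -/
import Mathlib

section
/- The map Φ restricted to D is a bijection from D onto I; that is, Φ maps D into I, is injective on D, and every point of I is the image under Φ of some point of D. (Bijectivity part of Theorem 4.3, inversion of the fluid variables.) -/
/-- Bijectivity part of Theorem 4.3: the fluid-variable map Φ is a bijection
from D onto I. -/
theorem stmt0 (ρ₀ : ℝ) (hρ₀ : 0 < ρ₀) (p : ℝ → ℝ) (hp : ContDiff ℝ 1 p)
    (hp0 : p ρ₀ = 0) (hpnn : ∀ ρ : ℝ, ρ₀ ≤ ρ → 0 ≤ p ρ)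
    (hp' : ∀ ρ : ℝ, ρ₀ ≤ ρ → 0 < deriv p ρ ∧ deriv p ρ < 1)
    (D : Set (ℝ × ℝ)) (hD : D = {x : ℝ × ℝ | ρ₀ ≤ x.1 ∧ 0 ≤ x.2 ∧ x.2 < 1})
    (I : Set (ℝ × ℝ))
    (hI : I = {y : ℝ × ℝ | 0 ≤ y.2 ∧ ρ₀ / 2 + Real.sqrt (ρ₀ ^ 2 / 4 + y.2 ^ 2) ≤ y.1})
    (Φ : ℝ × ℝ → ℝ × ℝ)
    (hΦ : ∀ x : ℝ × ℝ, Φ x = ((x.1 + p x.1 * x.2 ^ 2) / (1 - x.2 ^ 2),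
      ((x.1 + p x.1) * x.2) / (1 - x.2 ^ 2))) :
    Set.BijOn Φ D I := by
  have hlip : ∀ a b : ℝ, ρ₀ ≤ a → a ≤ b → p b - p a ≤ b - a := by
    intro a b ha hab
    have hd : Differentiable ℝ p := hp.differentiable (by norm_num)
    rcases eq_or_lt_of_le hab with h | h
    · subst h; simp
    · obtain ⟨c, hc, hc2⟩ := exists_deriv_eq_slope p h hd.continuous.continuousOn
        hd.differentiableOn
      have h1 := (hp' c (ha.trans hc.1.le)).2
      have hba : 0 < b - a := by linarith
      rw [hc2, div_lt_one hba] at h1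
      exact h1.le
  have hanti : ∀ m a b : ℝ, ρ₀ ≤ a → a < b → b ≤ m →
      (m + p b) * (m - b) < (m + p a) * (m - a) := by
    intro m a b ha hab hbm
    have h1 := mul_le_mul_of_nonneg_right (hlip a b ha hab.le) (sub_nonneg.2 hbm)
    have h2 := hpnn a ha
    have h3 : 0 < (b - a) * (p a + b) := mul_pos (by linarith) (by linarith)
    nlinarith
  have hkey : ∀ r v : ℝ, ρ₀ ≤ r → 0 ≤ v → v < 1 → ∀ m j : ℝ,
      m = (r + p r * v ^ 2) / (1 - v ^ 2) → j = ((r + p r) * v) / (1 - v ^ 2) →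
      r ≤ m ∧ 0 ≤ j ∧ (m + p r) * (m - r) = j ^ 2 ∧ j = (m + p r) * v := by
    intro r v hr hv hv1 m j hm hj
    have hpos : 0 < 1 - v ^ 2 := by nlinarith
    have hpr := hpnn r hr
    have hj0 : 0 ≤ j := by
      rw [hj]; exact div_nonneg (mul_nonneg (by linarith) hv) hpos.le
    have e1 : m - r = j * v := by
      rw [hm, hj]; field_simp; ring
    have e2 : j = (m + p r) * v := by
      rw [hm, hj]; field_simp; ring
    have h4 : 0 ≤ j * v := mul_nonneg hj0 hv
    refine ⟨by linarith, hj0, ?_, e2⟩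
    rw [e1]
    calc (m + p r) * (j * v) = j * ((m + p r) * v) := by ring
      _ = j ^ 2 := by rw [← e2]; ring
  subst hD hI
  refine ⟨?_, ?_, ?_⟩
  · rintro ⟨r, v⟩ ⟨hr, hv, hv1⟩
    simp only at hr hv hv1
    obtain ⟨h1, h2, h3, -⟩ := hkey r v hr hv hv1 _ _ rfl rfl
    rw [hΦ]
    simp only [Set.mem_setOf_eq]
    generalize (r + p r * v ^ 2) / (1 - v ^ 2) = m at *
    generalize ((r + p r) * v) / (1 - v ^ 2) = j at *
    refine ⟨h2, ?_⟩
    have h5 : j ^ 2 ≤ m * (m - ρ₀) := by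
      rcases eq_or_lt_of_le hr with h | h
      · subst h; rw [← h3, hp0, add_zero]
      · have := hanti m ρ₀ r le_rfl h h1
        rw [hp0, add_zero] at this
        linarith
    have h6 : Real.sqrt (ρ₀ ^ 2 / 4 + j ^ 2) ≤ m - ρ₀ / 2 :=
      Real.sqrt_le_iff.2 ⟨by linarith, by nlinarith⟩
    linarith
  · rintro ⟨r, v⟩ ⟨hr, hv, hv1⟩ ⟨s, w⟩ ⟨hs, hw, hw1⟩ heq
    simp only at hr hv hv1 hs hw hw1
    rw [hΦ, hΦ] at heq
    obtain ⟨q1, q2⟩ := Prod.mk.inj heq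
    simp only at q1 q2
    obtain ⟨a1, a2, a3, a4⟩ := hkey r v hr hv hv1 _ _ rfl rfl
    obtain ⟨b1, b2, b3, b4⟩ := hkey s w hs hw hw1 _ _ q1 q2
    generalize (r + p r * v ^ 2) / (1 - v ^ 2) = m at *
    generalize ((r + p r) * v) / (1 - v ^ 2) = j at *
    have hrs : r = s := by
      rcases lt_trichotomy r s with h | h | h
      · have := hanti m r s hr h b1
        linarith
      · exact h
      · have := hanti m s r hs h a1
        linarith
    subst hrs
    have hpr := hpnn r hr
    have hne : m + p r ≠ 0 := by linarith
    have : v = w := mul_left_cancel₀ hne (a4.symm.trans b4)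
    rw [this]
  · rintro ⟨m, j⟩ ⟨hj, hm⟩
    simp only at hj hm
    have hs0 : 0 ≤ Real.sqrt (ρ₀ ^ 2 / 4 + j ^ 2) := Real.sqrt_nonneg _
    have hs1 : Real.sqrt (ρ₀ ^ 2 / 4 + j ^ 2) ^ 2 = ρ₀ ^ 2 / 4 + j ^ 2 :=
      Real.sq_sqrt (by positivity)
    have hs2 : ρ₀ / 2 ≤ Real.sqrt (ρ₀ ^ 2 / 4 + j ^ 2) :=
      Real.le_sqrt_of_sq_le (by nlinarith [sq_nonneg j])
    have hm0 : ρ₀ ≤ m := by linarith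
    have hF0 : j ^ 2 ≤ (m + p ρ₀) * (m - ρ₀) := by
      rw [hp0]; nlinarith
    have hc : ContinuousOn (fun r => (m + p r) * (m - r)) (Set.Icc ρ₀ m) := by
      have := hp.continuous
      fun_prop
    obtain ⟨r, ⟨hr, hrm⟩, hF⟩ := intermediate_value_Icc' hm0 hc
      (show j ^ 2 ∈ Set.Icc ((m + p m) * (m - m)) ((m + p ρ₀) * (m - ρ₀)) from
        ⟨by rw [sub_self, mul_zero]; positivity, hF0⟩)
    simp only at hF
    have hpr := hpnn r hr
    have hpos : 0 < m + p r := by linarith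
    have hv : j / (m + p r) * (m + p r) = j := div_mul_cancel₀ _ hpos.ne'
    have hv0 : 0 ≤ j / (m + p r) := by positivity
    have hv1 : j / (m + p r) < 1 := by
      rw [div_lt_one hpos]
      nlinarith
    refine ⟨(r, j / (m + p r)), ⟨hr, hv0, hv1⟩, ?_⟩
    rw [hΦ]
    simp only
    generalize j / (m + p r) = v at *
    have hd : 0 < 1 - v ^ 2 := by nlinarith
    have e : m - r = (m + p r) * v ^ 2 := by
      apply mul_left_cancel₀ hpos.ne'
      rw [hF, ← hv]; ring
    rw [Prod.mk.injEq, div_eq_iff hd.ne', div_eq_iff hd.ne']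
    constructor
    · linarith
    · rw [← hv]
      have : r + p r = (m + p r) * (1 - v ^ 2) := by linarith
      rw [this]; ring
end

section
/- Let k be an integer and ℓ ≥ 0 an integer. For l = 0, …, ℓ let p̊_l : ℝ³∖{0} → ℝ³ be smooth vector fields which are positively homogeneous of degree 0 (p̊_l(t x) = p̊_l(x) for all t > 0 and x ≠ 0). Then there exist smooth vector fields V̊_l : ℝ³∖{0} → ℝ³, l = 0, …, ℓ+2, positively homogeneous of degree 0, such that the vector field V(x) := ‖x‖^k Σ_{l=0}^{ℓ+2} (log ‖x‖)^l V̊_l(x) satisfies, componentwise on ℝ³∖{0}, Δ V^a + (1/3) ∂^a (∂_b V^b) = ‖x‖^{k−2} Σ_{l=0}^{ℓ} (log ‖x‖)^l p̊_l^a(x). (Smooth-data version of Lemma 3.6, Meyers' potential for the flat conformal Killing–divergence operator L_δ.) -/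
/-- The partial derivative in the i-th coordinate direction of a scalar
function on Euclidean ℝ³. -/
noncomputable def pd (i : Fin 3) (f : EuclideanSpace ℝ (Fin 3) → ℝ) :
    EuclideanSpace ℝ (Fin 3) → ℝ :=
  fun x => fderiv ℝ f x (EuclideanSpace.single i 1)

/-- The flat conformal Killing–divergence operator
(L_δ V)^a = Δ V^a + (1/3) ∂^a (div V) acting on vector fields on ℝ³,
componentwise. -/
noncomputable def Ldelta
    (V : EuclideanSpace ℝ (Fin 3) → EuclideanSpace ℝ (Fin 3)) (a : Fin 3) :
    EuclideanSpace ℝ (Fin 3) → ℝ :=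
  fun x => (∑ i : Fin 3, pd i (pd i (fun y => V y a)) x) +
    (1 / 3) * pd a (fun y => ∑ b : Fin 3, pd b (fun z => V z b) y) x

section helpers
open scoped ContDiff Topology

/-- Euclidean three-space. -/
abbrev E3 := EuclideanSpace ℝ (Fin 3)

/-- Smooth away from the origin. -/
def Sm (f : E3 → ℝ) : Prop := ContDiffOn ℝ (⊤ : ℕ∞) f {x : E3 | x ≠ 0}

/-- Positively homogeneous of degree zero. -/
def Hom0 (f : E3 → ℝ) : Prop := ∀ t : ℝ, 0 < t → ∀ x : E3, x ≠ 0 → f (t • x) = f x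

/-- Laplacian. -/
noncomputable def Lap (f : E3 → ℝ) : E3 → ℝ := fun x => ∑ i : Fin 3, pd i (pd i f) x

theorem isOpenN : IsOpen {x : E3 | x ≠ 0} := isOpen_ne

theorem nhdsN {x : E3} (hx : x ≠ 0) : {x : E3 | x ≠ 0} ∈ 𝓝 x := isOpenN.mem_nhds hx

theorem Sm.contDiffAt {f : E3 → ℝ} (hf : Sm f) {x : E3} (hx : x ≠ 0) :
    ContDiffAt ℝ (⊤ : ℕ∞) f x := ContDiffOn.contDiffAt hf (nhdsN hx)

theorem Sm.diff {f : E3 → ℝ} (hf : Sm f) {x : E3} (hx : x ≠ 0) :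
    DifferentiableAt ℝ f x := (hf.contDiffAt hx).differentiableAt (by simp)

theorem Sm.of_at {f : E3 → ℝ} (hf : ∀ x : E3, x ≠ 0 → ContDiffAt ℝ (⊤ : ℕ∞) f x) : Sm f :=
  fun x hx => (hf x hx).contDiffWithinAt

theorem Sm.add {f g : E3 → ℝ} (hf : Sm f) (hg : Sm g) : Sm (fun x => f x + g x) :=
  ContDiffOn.add hf hg

theorem Sm.mul {f g : E3 → ℝ} (hf : Sm f) (hg : Sm g) : Sm (fun x => f x * g x) :=
  ContDiffOn.mul hf hg

theorem Sm.const (c : ℝ) : Sm (fun _ => c) := contDiffOn_const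

theorem Sm.sum {ι : Type*} (s : Finset ι) {f : ι → E3 → ℝ} (hf : ∀ i ∈ s, Sm (f i)) :
    Sm (fun x => ∑ i ∈ s, f i x) := ContDiffOn.sum hf

theorem Sm.pd {f : E3 → ℝ} (hf : Sm f) (i : Fin 3) : Sm (pd i f) := by
  apply Sm.of_at
  intro x hx
  have h := (hf.contDiffAt hx).fderiv_right (m := (⊤ : ℕ∞)) (by simp)
  exact h.clm_apply contDiffAt_const

theorem Sm.lap {f : E3 → ℝ} (hf : Sm f) : Sm (Lap f) :=
  Sm.sum _ fun i _ => (hf.pd i).pd i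

theorem Sm.norm : Sm (fun x => ‖x‖) :=
  Sm.of_at fun _ hx => contDiffAt_norm ℝ hx

theorem Sm.coord (i : Fin 3) : Sm (fun x => x i) :=
  Sm.of_at fun x _ => by fun_prop

theorem pd_congr {f g : E3 → ℝ} (h : ∀ x : E3, x ≠ 0 → f x = g x) {x : E3} (hx : x ≠ 0)
    (i : Fin 3) : pd i f x = pd i g x := by
  have : f =ᶠ[𝓝 x] g := Filter.eventually_of_mem (nhdsN hx) h
  simp only [pd, this.fderiv_eq]

theorem Lap_congr {f g : E3 → ℝ} (h : ∀ x : E3, x ≠ 0 → f x = g x) {x : E3} (hx : x ≠ 0) :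
    Lap f x = Lap g x :=
  Finset.sum_congr rfl fun i _ => pd_congr (fun _ hy => pd_congr h hy i) hx i

theorem pd_add {f g : E3 → ℝ} (hf : Sm f) (hg : Sm g) {x : E3} (hx : x ≠ 0) (i : Fin 3) :
    pd i (fun y => f y + g y) x = pd i f x + pd i g x := by
  simp only [pd]
  rw [fderiv_fun_add (hf.diff hx) (hg.diff hx)]; rfl

theorem pd_mul {f g : E3 → ℝ} (hf : Sm f) (hg : Sm g) {x : E3} (hx : x ≠ 0) (i : Fin 3) :
    pd i (fun y => f y * g y) x = f x * pd i g x + g x * pd i f x := by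
  simp only [pd]
  rw [fderiv_fun_mul (hf.diff hx) (hg.diff hx)]; rfl

theorem pd_const (c : ℝ) (i : Fin 3) (x : E3) : pd i (fun _ => c) x = 0 := by
  simp [pd]

theorem pd_const_mul {f : E3 → ℝ} (c : ℝ) (hf : Sm f) {x : E3} (hx : x ≠ 0) (i : Fin 3) :
    pd i (fun y => c * f y) x = c * pd i f x := by
  rw [pd_mul (Sm.const c) hf hx, pd_const]; ring

theorem pd_sum {ι : Type*} (s : Finset ι) {f : ι → E3 → ℝ} (hf : ∀ i ∈ s, Sm (f i))
    {x : E3} (hx : x ≠ 0) (j : Fin 3) :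
    pd j (fun y => ∑ i ∈ s, f i y) x = ∑ i ∈ s, pd j (f i) x := by
  simp only [pd]
  rw [fderiv_fun_sum (fun i hi => (hf i hi).diff hx)]
  simp

theorem pd_comp {φ : ℝ → ℝ} {φ' : ℝ} {f : E3 → ℝ} {x : E3} (hφ : HasDerivAt φ φ' (f x))
    (hf : DifferentiableAt ℝ f x) (i : Fin 3) :
    pd i (fun y => φ (f y)) x = φ' * pd i f x := by
  have := hφ.comp_hasFDerivAt x hf.hasFDerivAt
  simp only [pd]
  rw [show (fun y => φ (f y)) = φ ∘ f from rfl, this.fderiv]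
  simp

theorem pd_coord (i j : Fin 3) (x : E3) :
    pd i (fun y => y j) x = if i = j then 1 else 0 := by
  have : HasFDerivAt (fun y : E3 => y j) (EuclideanSpace.proj (𝕜 := ℝ) j : E3 →L[ℝ] ℝ) x :=
    (EuclideanSpace.proj (𝕜 := ℝ) j : E3 →L[ℝ] ℝ).hasFDerivAt
  simp only [pd, this.fderiv]
  simp [eq_comm]

theorem pd_norm {x : E3} (hx : x ≠ 0) (i : Fin 3) : pd i (fun y => ‖y‖) x = x i / ‖x‖ := by
  have h1 : HasFDerivAt (fun y : E3 => ‖y‖ ^ 2) (2 • (innerSL ℝ x)) x :=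
    (hasStrictFDerivAt_norm_sq x).hasFDerivAt
  have h2 := h1.sqrt (by positivity)
  have h3 : (fun y : E3 => √(‖y‖ ^ 2)) = fun y => ‖y‖ := by
    ext y; exact Real.sqrt_sq (norm_nonneg y)
  rw [h3] at h2
  simp only [pd, h2.fderiv]
  have hx' := norm_pos_iff.2 hx
  rw [Real.sqrt_sq hx'.le]
  simp [EuclideanSpace.inner_single_right]
  field_simp

theorem normsq_eq (x : E3) : ∑ i : Fin 3, x i ^ 2 = ‖x‖ ^ 2 := by
  rw [EuclideanSpace.norm_sq_eq]; simp

theorem Lap_add {f g : E3 → ℝ} (hf : Sm f) (hg : Sm g) {x : E3} (hx : x ≠ 0) :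
    Lap (fun y => f y + g y) x = Lap f x + Lap g x := by
  simp only [Lap]
  rw [← Finset.sum_add_distrib]
  refine Finset.sum_congr rfl fun i _ => ?_
  rw [pd_congr (fun y hy => pd_add hf hg hy i) hx, pd_add (hf.pd i) (hg.pd i) hx]

theorem Lap_const_mul {f : E3 → ℝ} (c : ℝ) (hf : Sm f) {x : E3} (hx : x ≠ 0) :
    Lap (fun y => c * f y) x = c * Lap f x := by
  simp only [Lap]
  rw [Finset.mul_sum]
  refine Finset.sum_congr rfl fun i _ => ?_
  rw [pd_congr (fun y hy => pd_const_mul c hf hy i) hx, pd_const_mul c (hf.pd i) hx]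

theorem Lap_mul {f g : E3 → ℝ} (hf : Sm f) (hg : Sm g) {x : E3} (hx : x ≠ 0) :
    Lap (fun y => f y * g y) x =
      f x * Lap g x + g x * Lap f x + 2 * ∑ i : Fin 3, pd i f x * pd i g x := by
  simp only [Lap]
  rw [Finset.mul_sum, Finset.mul_sum, Finset.mul_sum, ← Finset.sum_add_distrib,
    ← Finset.sum_add_distrib]
  refine Finset.sum_congr rfl fun i _ => ?_
  rw [pd_congr (fun y hy => pd_mul hf hg hy i) hx,
    pd_add (hf.mul (hg.pd i)) (hg.mul (hf.pd i)) hx, pd_mul hf (hg.pd i) hx,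
    pd_mul hg (hf.pd i) hx]
  ring

/-- Chain rule for the Laplacian. -/
theorem Lap_comp {φ φ' : ℝ → ℝ} {φ'' : ℝ} {f : E3 → ℝ} (hf : Sm f) {x : E3} (hx : x ≠ 0)
    (h1 : ∀ᶠ y in 𝓝 (f x), HasDerivAt φ (φ' y) y) (h2 : HasDerivAt φ' φ'' (f x)) :
    Lap (fun y => φ (f y)) x =
      φ'' * (∑ i : Fin 3, pd i f x ^ 2) + φ' (f x) * Lap f x := by
  simp only [Lap]
  rw [Finset.mul_sum, Finset.mul_sum, ← Finset.sum_add_distrib]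
  refine Finset.sum_congr rfl fun i _ => ?_
  have hev : pd i (fun y => φ (f y)) =ᶠ[𝓝 x] fun y => φ' (f y) * pd i f y := by
    have hc : ContinuousAt f x := (hf.diff hx).continuousAt
    filter_upwards [hc.eventually h1, nhdsN hx] with y hy hy0
    exact pd_comp hy (hf.diff hy0) i
  have hd : DifferentiableAt ℝ (fun y => φ' (f y)) x :=
    (h2.differentiableAt.comp x (hf.diff hx) : _)
  have e1 : pd i (pd i (fun y => φ (f y))) x = pd i (fun y => φ' (f y) * pd i f y) x := by
    simp only [pd] at hev ⊢
    rw [hev.fderiv_eq]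
  rw [e1]
  have e2 : pd i (fun y => φ' (f y) * pd i f y) x =
      φ' (f x) * pd i (pd i f) x + pd i f x * pd i (fun y => φ' (f y)) x := by
    conv_lhs => rw [pd]
    rw [fderiv_fun_mul hd ((hf.pd i).diff hx)]; rfl
  rw [e2, pd_comp h2 (hf.diff hx)]
  ring

theorem sum_pd_norm_sq {x : E3} (hx : x ≠ 0) :
    ∑ i : Fin 3, pd i (fun y => ‖y‖) x ^ 2 = 1 := by
  have hx' := (norm_pos_iff.2 hx).ne'
  simp only [pd_norm hx, div_pow]
  rw [← Finset.sum_div, normsq_eq]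
  field_simp

theorem Lap_norm {x : E3} (hx : x ≠ 0) : Lap (fun y => ‖y‖) x = 2 / ‖x‖ := by
  have hx' := (norm_pos_iff.2 hx).ne'
  have hinv : Sm (fun y : E3 => ‖y‖⁻¹) := Sm.of_at fun y hy =>
    (Sm.norm.contDiffAt hy).inv (norm_pos_iff.2 hy).ne'
  have : ∀ i : Fin 3, pd i (pd i (fun y => ‖y‖)) x = ‖x‖⁻¹ - x i ^ 2 / ‖x‖ ^ 3 := by
    intro i
    rw [pd_congr (g := fun y => y i * ‖y‖⁻¹) (fun y hy => by rw [pd_norm hy, div_eq_mul_inv]) hx,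
      pd_mul (Sm.coord i) hinv hx, pd_coord,
      pd_comp (hasDerivAt_inv hx') (Sm.norm.diff hx), pd_norm hx]
    simp
    field_simp
    ring
  simp only [Lap, this]
  rw [Finset.sum_sub_distrib, ← Finset.sum_div, normsq_eq]
  simp
  field_simp
  norm_num

theorem Hom0.euler {u : E3 → ℝ} (hu : Sm u) (h0 : Hom0 u) {x : E3} (hx : x ≠ 0) :
    ∑ i : Fin 3, x i * pd i u x = 0 := by
  have h1 : HasDerivAt (fun t : ℝ => u (t • x)) (fderiv ℝ u x x) 1 := by
    have hg : HasDerivAt (fun t : ℝ => t • x) x 1 := by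
      simpa using (hasDerivAt_id (1 : ℝ)).smul_const x
    have := (hu.diff hx).hasFDerivAt
    rw [show x = (1 : ℝ) • x by simp] at this
    have := this.comp_hasDerivAt (1 : ℝ) hg
    simp only [one_smul] at this
    exact this
  have h2 : HasDerivAt (fun t : ℝ => u (t • x)) 0 1 := by
    have : (fun t : ℝ => u (t • x)) =ᶠ[𝓝 1] fun _ => u x := by
      filter_upwards [lt_mem_nhds (zero_lt_one' ℝ)] with t ht
      exact h0 t ht x hx
    exact (hasDerivAt_const (1 : ℝ) (u x)).congr_of_eventuallyEq this
  have h3 := h1.unique h2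
  have hxs : x = ∑ i : Fin 3, x i • EuclideanSpace.single i (1 : ℝ) := by
    ext j
    simp [Finset.sum_apply, Pi.single_apply]
  rw [← h3]
  conv_rhs => rw [congrArg (fderiv ℝ u x) hxs]
  simp [pd]

/-- Laplacian of a radial function times a degree-zero homogeneous function. -/
theorem Lap_radial_mul {φ φ' : ℝ → ℝ} {φ'' : ℝ} {u : E3 → ℝ} (hu : Sm u) (h0 : Hom0 u)
    (hφ : Sm (fun y => φ ‖y‖)) {x : E3} (hx : x ≠ 0)
    (h1 : ∀ r : ℝ, 0 < r → HasDerivAt φ (φ' r) r) (h2 : HasDerivAt φ' φ'' ‖x‖) :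
    Lap (fun y => φ ‖y‖ * u y) x =
      φ ‖x‖ * Lap u x + (φ'' + 2 / ‖x‖ * φ' ‖x‖) * u x := by
  have hx' := norm_pos_iff.2 hx
  have h1' : ∀ᶠ r in 𝓝 ‖x‖, HasDerivAt φ (φ' r) r := by
    filter_upwards [lt_mem_nhds hx'] with r hr using h1 r hr
  rw [Lap_mul hφ hu hx, Lap_comp (φ := φ) Sm.norm hx h1' h2, sum_pd_norm_sq hx, Lap_norm hx]
  have : ∑ i : Fin 3, pd i (fun y => φ ‖y‖) x * pd i u x = 0 := by
    have e : ∀ i : Fin 3, pd i (fun y => φ ‖y‖) x * pd i u x =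
        (φ' ‖x‖ / ‖x‖) * (x i * pd i u x) := by
      intro i
      rw [pd_comp (h1 _ hx') (Sm.norm.diff hx), pd_norm hx]
      ring
    simp only [e]
    rw [← Finset.mul_sum, h0.euler hu hx, mul_zero]
  rw [this]
  ring


/-- The solvability statement on the sphere, in homogeneous form. -/
def Key : Prop := ∀ (k : ℕ) (p : E3 → ℝ), Sm p → Hom0 p →
  ∃ u h : E3 → ℝ, Sm u ∧ Hom0 u ∧ Sm h ∧ Hom0 h ∧
    (∀ x : E3, x ≠ 0 → ‖x‖ ^ 2 * Lap u x + (k : ℝ) * (k + 1) * u x = p x + h x) ∧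
    (∀ x : E3, x ≠ 0 → ‖x‖ ^ 2 * Lap h x + (k : ℝ) * (k + 1) * h x = 0)

theorem Key.int (hK : Key) (k : ℤ) (p : E3 → ℝ) (hp : Sm p) (hp0 : Hom0 p) :
  ∃ u h : E3 → ℝ, Sm u ∧ Hom0 u ∧ Sm h ∧ Hom0 h ∧
    (∀ x : E3, x ≠ 0 → ‖x‖ ^ 2 * Lap u x + (k : ℝ) * (k + 1) * u x = p x + h x) ∧
    (∀ x : E3, x ≠ 0 → ‖x‖ ^ 2 * Lap h x + (k : ℝ) * (k + 1) * h x = 0) := by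
  rcases le_or_gt 0 k with hk | hk
  · obtain ⟨n, rfl⟩ := Int.eq_ofNat_of_zero_le hk
    simpa using hK n p hp hp0
  · obtain ⟨n, hn⟩ := Int.eq_ofNat_of_zero_le (show 0 ≤ -1 - k by lia)
    have : k = -1 - (n : ℤ) := by lia
    subst this
    have h := hK n p hp hp0
    have e : (((-1 - (n : ℤ) : ℤ)) : ℝ) * (((-1 - (n : ℤ) : ℤ) : ℝ) + 1) = (n : ℝ) * (n + 1) := by
      push_cast; ring
    rw [e]
    exact h

/-- Finite log-expansions with smooth degree-zero coefficients (`n` terms). -/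
def PH (k : ℤ) (n : ℕ) (f : E3 → ℝ) : Prop :=
  ∃ c : ℕ → E3 → ℝ, (∀ l, Sm (c l)) ∧ (∀ l, Hom0 (c l)) ∧
    ∀ x : E3, x ≠ 0 → f x = ∑ l ∈ Finset.range n, ‖x‖ ^ k * Real.log ‖x‖ ^ l * c l x

theorem Sm.congr {f g : E3 → ℝ} (hf : Sm f) (h : ∀ x : E3, x ≠ 0 → g x = f x) : Sm g :=
  ContDiffOn.congr hf h

theorem Hom0.add {f g : E3 → ℝ} (hf : Hom0 f) (hg : Hom0 g) : Hom0 (fun x => f x + g x) :=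
  fun t ht x hx => by simp only [hf t ht x hx, hg t ht x hx]

theorem Hom0.mul {f g : E3 → ℝ} (hf : Hom0 f) (hg : Hom0 g) : Hom0 (fun x => f x * g x) :=
  fun t ht x hx => by simp only [hf t ht x hx, hg t ht x hx]

theorem Hom0.const (c : ℝ) : Hom0 (fun _ => c) := fun _ _ _ _ => rfl

theorem Sm.radial (k : ℤ) (l : ℕ) : Sm (fun x => ‖x‖ ^ k * Real.log ‖x‖ ^ l) := by
  apply Sm.of_at
  intro x hx
  have hx' := (norm_pos_iff.2 hx).ne'
  have h := Sm.norm.contDiffAt hx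
  refine ContDiffAt.mul ?_ ((h.log hx').pow l)
  cases k with
  | ofNat n => simpa using h.pow n
  | negSucc n => 
    simp only [zpow_negSucc]
    exact (h.pow (n + 1)).inv (pow_ne_zero _ hx')

theorem PH.sm {k : ℤ} {n : ℕ} {f : E3 → ℝ} (h : PH k n f) : Sm f := by
  obtain ⟨c, h1, _, h3⟩ := h
  exact (Sm.sum _ fun l _ => (Sm.radial k l).mul (h1 l)).congr h3

theorem PH.congr {k : ℤ} {n : ℕ} {f g : E3 → ℝ} (h : PH k n f)
    (hg : ∀ x : E3, x ≠ 0 → g x = f x) : PH k n g := by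
  obtain ⟨c, h1, h2, h3⟩ := h
  exact ⟨c, h1, h2, fun x hx => by rw [hg x hx, h3 x hx]⟩

theorem PH.add {k : ℤ} {n : ℕ} {f g : E3 → ℝ} (hf : PH k n f) (hg : PH k n g) :
    PH k n (fun x => f x + g x) := by
  obtain ⟨c, h1, h2, h3⟩ := hf
  obtain ⟨d, g1, g2, g3⟩ := hg
  refine ⟨fun l x => c l x + d l x, fun l => (h1 l).add (g1 l), fun l => (h2 l).add (g2 l), ?_⟩
  intro x hx
  simp only [h3 x hx, g3 x hx]
  rw [← Finset.sum_add_distrib]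
  exact Finset.sum_congr rfl fun l _ => by ring

theorem PH.const_mul {k : ℤ} {n : ℕ} {f : E3 → ℝ} (a : ℝ) (hf : PH k n f) :
    PH k n (fun x => a * f x) := by
  obtain ⟨c, h1, h2, h3⟩ := hf
  refine ⟨fun l x => a * c l x, fun l => (Sm.const a).mul (h1 l),
    fun l => (Hom0.const a).mul (h2 l), ?_⟩
  intro x hx
  simp only [h3 x hx]
  rw [Finset.mul_sum]
  exact Finset.sum_congr rfl fun l _ => by ring

theorem PH.zero (k : ℤ) (n : ℕ) : PH k n (fun _ => 0) :=
  ⟨fun _ _ => 0, fun _ => Sm.const 0, fun _ => Hom0.const 0, by simp⟩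

theorem PH.mono {k : ℤ} {n m : ℕ} (hnm : n ≤ m) {f : E3 → ℝ} (hf : PH k n f) : PH k m f := by
  obtain ⟨c, h1, h2, h3⟩ := hf
  refine ⟨fun l x => if l < n then c l x else 0, fun l => ?_, fun l => ?_, ?_⟩
  · by_cases h : l < n <;> simp only [h, if_true, if_false]
    · exact h1 l
    · exact Sm.const 0
  · by_cases h : l < n <;> simp only [h, if_true, if_false]
    · exact h2 l
    · exact Hom0.const 0
  · intro x hx
    rw [h3 x hx]
    obtain ⟨d, rfl⟩ := Nat.exists_eq_add_of_le hnm
    rw [Finset.sum_range_add]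
    simp only [add_lt_iff_neg_left, not_lt_zero, if_false, mul_zero, Finset.sum_const_zero,
      add_zero]
    exact Finset.sum_congr rfl fun l hl => by rw [if_pos (Finset.mem_range.1 hl)]

theorem PH.term {k : ℤ} {n l : ℕ} {c : ℝ} (h : l < n ∨ c = 0) {u : E3 → ℝ} (hu : Sm u)
    (h0 : Hom0 u) : PH k n (fun x => c * (‖x‖ ^ k * Real.log ‖x‖ ^ l * u x)) := by
  rcases h with h | rfl
  · refine ⟨fun j x => if j = l then c * u x else 0, fun j => ?_, fun j => ?_, ?_⟩
    · by_cases h : j = l <;> simp only [h, if_true, if_false]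
      · exact (Sm.const c).mul hu
      · exact Sm.const 0
    · by_cases h : j = l <;> simp only [h, if_true, if_false]
      · exact (Hom0.const c).mul h0
      · exact Hom0.const 0
    · intro x hx
      simp [h]
      ring
  · simpa using PH.zero k n

theorem PH.sum {ι : Type*} (s : Finset ι) {k : ℤ} {n : ℕ} {f : ι → E3 → ℝ}
    (h : ∀ i ∈ s, PH k n (f i)) : PH k n (fun x => ∑ i ∈ s, f i x) := by
  classical
  induction s using Finset.induction_on with
  | empty => simpa using PH.zero k n
  | insert a s ha ih =>
    simp only [Finset.sum_insert ha]
    exact (h a (by simp)).add (ih fun i hi => h i (by simp [hi]))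

theorem Hom0.pd {u : E3 → ℝ} (hu : Sm u) (h0 : Hom0 u) (i : Fin 3) :
    Hom0 (fun x => ‖x‖ * pd i u x) := by
  intro t ht x hx
  have htx : t • x ≠ 0 := smul_ne_zero ht.ne' hx
  have h1 : HasFDerivAt (fun y : E3 => u (t • y))
      ((fderiv ℝ u (t • x)).comp (t • ContinuousLinearMap.id ℝ E3)) x :=
    ((hu.diff htx).hasFDerivAt).comp x ((hasFDerivAt_id x).const_smul t)
  have h2 : HasFDerivAt u ((fderiv ℝ u (t • x)).comp (t • ContinuousLinearMap.id ℝ E3)) x := by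
    refine h1.congr_of_eventuallyEq ?_
    filter_upwards [nhdsN hx] with y hy
    exact (h0 t ht y hy).symm
  simp only [_root_.pd]
  rw [h2.fderiv, norm_smul, Real.norm_of_nonneg ht.le]
  simp
  ring

theorem Hom0.coordDiv (i : Fin 3) : Hom0 (fun x => x i / ‖x‖) := by
  intro t ht x hx
  simp only [norm_smul, Real.norm_of_nonneg ht.le]
  have := norm_pos_iff.2 hx
  simp
  field_simp

theorem Sm.coordDiv (i : Fin 3) : Sm (fun x => x i / ‖x‖) := by
  refine Sm.of_at fun x hx => ?_
  exact ((Sm.coord i).contDiffAt hx).div (Sm.norm.contDiffAt hx) (norm_pos_iff.2 hx).ne'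

theorem hasDerivAt_radial (k : ℤ) (l : ℕ) (r : ℝ) (hr : 0 < r) :
    HasDerivAt (fun r : ℝ => r ^ k * Real.log r ^ l)
      (k * (r ^ (k - 1) * Real.log r ^ l) + l * (r ^ (k - 1) * Real.log r ^ (l - 1))) r := by
  have h := (hasDerivAt_zpow k r (Or.inl hr.ne')).mul ((Real.hasDerivAt_log hr.ne').pow l)
  refine h.congr_deriv ?_
  rw [zpow_sub_one₀ hr.ne']
  simp only [Pi.pow_apply]
  ring

theorem PH.pd {k : ℤ} {n : ℕ} {f : E3 → ℝ} (hf : PH k n f) (i : Fin 3) :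
    PH (k - 1) n (pd i f) := by
  obtain ⟨c, h1, h2, h3⟩ := hf
  have key : ∀ x : E3, x ≠ 0 → _root_.pd i f x = ∑ l ∈ Finset.range n,
      (1 * (‖x‖ ^ (k - 1) * Real.log ‖x‖ ^ l * (k * (x i / ‖x‖ * c l x) + ‖x‖ * _root_.pd i (c l) x))
        + l * (‖x‖ ^ (k - 1) * Real.log ‖x‖ ^ (l - 1) * (x i / ‖x‖ * c l x))) := by
    intro x hx
    have hx' := norm_pos_iff.2 hx
    rw [pd_congr h3 hx, pd_sum _ (fun l _ => (Sm.radial k l).mul (h1 l)) hx]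
    refine Finset.sum_congr rfl fun l _ => ?_
    rw [pd_mul (Sm.radial k l) (h1 l) hx,
      pd_comp (hasDerivAt_radial k l ‖x‖ hx') (Sm.norm.diff hx), pd_norm hx]
    rw [zpow_sub_one₀ hx'.ne']
    field_simp
    ring
  refine PH.congr ?_ key
  refine PH.sum _ fun l hl => PH.add (PH.term (Or.inl (Finset.mem_range.1 hl)) ?_ ?_)
    (PH.term ?_ ?_ ?_)
  · exact ((Sm.const k).mul ((Sm.coordDiv i).mul (h1 l))).add (Sm.norm.mul ((h1 l).pd i))
  · exact ((Hom0.const k).mul ((Hom0.coordDiv i).mul (h2 l))).add ((h2 l).pd (h1 l) i)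
  · rcases Nat.eq_zero_or_pos l with rfl | h
    · right; simp
    · left; have := Finset.mem_range.1 hl; omega
  · exact (Sm.coordDiv i).mul (h1 l)
  · exact (Hom0.coordDiv i).mul (h2 l)

theorem Lap_term (k : ℤ) (l : ℕ) {u : E3 → ℝ} (hu : Sm u) (h0 : Hom0 u) {x : E3} (hx : x ≠ 0) :
    Lap (fun y => ‖y‖ ^ k * Real.log ‖y‖ ^ l * u y) x =
      ‖x‖ ^ (k - 2) * Real.log ‖x‖ ^ l * (‖x‖ ^ 2 * Lap u x + (k : ℝ) * (k + 1) * u x) +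
      (l * (2 * k + 1)) * (‖x‖ ^ (k - 2) * Real.log ‖x‖ ^ (l - 1) * u x) +
      (l * ((l - 1 : ℕ) : ℝ)) * (‖x‖ ^ (k - 2) * Real.log ‖x‖ ^ (l - 1 - 1) * u x) := by
  have hx' := norm_pos_iff.2 hx
  have h2 := ((hasDerivAt_radial (k - 1) l ‖x‖ hx').const_mul (k : ℝ)).add
    ((hasDerivAt_radial (k - 1) (l - 1) ‖x‖ hx').const_mul (l : ℝ))
  rw [Lap_radial_mul (φ := fun r => r ^ k * Real.log r ^ l) hu h0 (Sm.radial k l) hx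
    (hasDerivAt_radial k l) h2]
  have e1 : k - 1 - 1 = k - 2 := by ring
  have e2 : ‖x‖ ^ (k - 1) = ‖x‖ ^ (k - 2) * ‖x‖ := by
    rw [← zpow_add_one₀ hx'.ne']; congr 1; ring
  have e3 : ‖x‖ ^ k = ‖x‖ ^ (k - 2) * ‖x‖ ^ 2 := by
    rw [← zpow_natCast, ← zpow_add₀ hx'.ne']; congr 1; simp
  rw [e1, e2, e3]
  push_cast
  field_simp
  ring

theorem PH.solve (hK : Key) (k : ℤ) (n : ℕ) : ∀ f : E3 → ℝ, PH (k - 2) n f →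
    ∃ u : E3 → ℝ, PH k (n + 1) u ∧ ∀ x : E3, x ≠ 0 → Lap u x = f x := by
  induction n with
  | zero =>
    intro f hf
    obtain ⟨c, h1, h2, h3⟩ := hf
    refine ⟨fun _ => 0, PH.zero _ _, fun x hx => ?_⟩
    rw [h3 x hx]
    simp only [Lap]
    simp only [Finset.range_zero, Finset.sum_empty]
    refine Finset.sum_eq_zero fun i _ => ?_
    rw [pd_congr (g := fun _ => 0) (fun y _ => pd_const 0 i y) hx, pd_const]
  | succ n ih =>
    intro f hf
    obtain ⟨c, h1, h2, h3⟩ := hf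
    obtain ⟨u, h, su, u0, sh, h0, eu, eh⟩ := hK.int k (c n) (h1 n) (h2 n)
    have hk : (2 * (k : ℝ) + 1) ≠ 0 := by
      have : (2 * k + 1 : ℤ) ≠ 0 := by lia
      exact_mod_cast this
    have hn : ((n : ℝ) + 1) ≠ 0 := by positivity
    set a : ℝ := -(1 / ((n + 1) * (2 * k + 1))) with ha
    let v : E3 → ℝ := fun x => 1 * (‖x‖ ^ k * Real.log ‖x‖ ^ n * u x) +
      a * (‖x‖ ^ k * Real.log ‖x‖ ^ (n + 1) * h x)
    have hv : PH k (n + 2) v := (PH.term (Or.inl (by omega)) su u0).add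
      (PH.term (Or.inl (by omega)) sh h0)
    let g : E3 → ℝ := fun x => (∑ l ∈ Finset.range n, ‖x‖ ^ (k - 2) * Real.log ‖x‖ ^ l * c l x) +
      ((-(n * (2 * k + 1))) * (‖x‖ ^ (k - 2) * Real.log ‖x‖ ^ (n - 1) * u x) +
       ((-(n * ((n - 1 : ℕ) : ℝ))) * (‖x‖ ^ (k - 2) * Real.log ‖x‖ ^ (n - 1 - 1) * u x) +
       (-a * ((n + 1) * n)) * (‖x‖ ^ (k - 2) * Real.log ‖x‖ ^ (n - 1) * h x)))
    have hg : PH (k - 2) n g := by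
      refine PH.add ⟨c, h1, h2, fun _ _ => rfl⟩ (PH.add (PH.term ?_ su u0)
        (PH.add (PH.term ?_ su u0) (PH.term ?_ sh h0)))
      all_goals
        rcases Nat.eq_zero_or_pos n with rfl | hpos
        · right; simp
        · left; omega
    obtain ⟨w, hw, ew⟩ := ih g hg
    refine ⟨fun x => v x + w x, hv.add (hw.mono (by omega)), fun x hx => ?_⟩
    rw [Lap_add hv.sm hw.sm hx, ew x hx]
    have ev : Lap v x = 1 * Lap (fun x => ‖x‖ ^ k * Real.log ‖x‖ ^ n * u x) x +
        a * Lap (fun x => ‖x‖ ^ k * Real.log ‖x‖ ^ (n + 1) * h x) x := by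
      have s1 := (Sm.radial k n).mul su
      have s2 := (Sm.radial k (n + 1)).mul sh
      simp only [v]
      rw [Lap_add ((Sm.const 1).mul s1) ((Sm.const a).mul s2) hx, Lap_const_mul 1 s1 hx,
        Lap_const_mul a s2 hx]
    rw [ev, Lap_term k n su u0 hx, Lap_term k (n + 1) sh h0 hx, eu x hx, eh x hx, h3 x hx,
      Finset.sum_range_succ]
    simp only [g, Nat.add_sub_cancel]
    push_cast
    have ha' : a * ((n + 1) * (2 * k + 1)) = -1 := by rw [ha]; field_simp
    linear_combination (‖x‖ ^ (k - 2) * Real.log ‖x‖ ^ n * h x) * ha'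

theorem pd_comm {f : E3 → ℝ} (hf : Sm f) {x : E3} (hx : x ≠ 0) (i j : Fin 3) :
    pd i (pd j f) x = pd j (pd i f) x := by
  have h := (hf.contDiffAt hx).isSymmSndFDerivAt (by simp; exact WithTop.coe_le_coe.2 (le_top : (2 : ℕ∞) ≤ ⊤))
  have hd : DifferentiableAt ℝ (fderiv ℝ f) x :=
    ((hf.contDiffAt hx).fderiv_right (m := (⊤ : ℕ∞)) (by simp)).differentiableAt (by simp)
  have e : ∀ i j : Fin 3, pd i (pd j f) x =
      fderiv ℝ (fderiv ℝ f) x (EuclideanSpace.single i 1) (EuclideanSpace.single j 1) := by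
    intro i j
    change fderiv ℝ (fun y => fderiv ℝ f y (EuclideanSpace.single j 1)) x _ = _
    rw [fderiv_clm_apply hd (differentiableAt_const _)]
    simp
  rw [e, e]
  exact h _ _

theorem solveVec (hK : Key) (k : ℤ) (n : ℕ) (f : Fin 3 → E3 → ℝ)
    (hf : ∀ a, PH (k - 2) n (f a)) :
    ∃ V : Fin 3 → E3 → ℝ, (∀ a, PH k (n + 2) (V a)) ∧ ∀ x : E3, x ≠ 0 → ∀ a,
      Lap (V a) x + (1 / 3) * pd a (fun y => ∑ b : Fin 3, pd b (V b) y) x = f a x := by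
  choose W hW eW using fun a => PH.solve hK k n (f a) (hf a)
  have hdiv : PH (k + 1 - 2) (n + 1) (fun x => (-1 / 4) * ∑ b : Fin 3, pd b (W b) x) := by
    rw [show k + 1 - 2 = k - 1 by ring]
    exact (PH.sum _ fun b _ => (hW b).pd b).const_mul _
  obtain ⟨φ, hφ, eφ⟩ := PH.solve hK (k + 1) (n + 1) _ hdiv
  have hφa : ∀ a, PH k (n + 2) (pd a φ) := fun a => by
    have := hφ.pd a
    rwa [show k + 1 - 1 = k by ring] at this
  refine ⟨fun a x => W a x + pd a φ x, fun a => ((hW a).mono (by omega)).add (hφa a), ?_⟩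
  intro x hx a
  rw [Lap_add (hW a).sm (hφa a).sm hx, eW a x hx]
  have sdiv : Sm (fun y => ∑ b : Fin 3, pd b (W b) y) := Sm.sum _ fun b _ => (hW b).sm.pd b
  have e1 : pd a (fun y => ∑ b : Fin 3, pd b (fun x => W b x + pd b φ x) y) x =
      (3 / 4) * pd a (fun y => ∑ b : Fin 3, pd b (W b) y) x := by
    rw [← pd_const_mul _ sdiv hx]
    refine pd_congr (fun y hy => ?_) hx a
    have : ∀ b, pd b (fun x => W b x + pd b φ x) y = pd b (W b) y + pd b (pd b φ) y :=
      fun b => pd_add (hW b).sm (hφa b).sm hy b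
    simp only [this]
    rw [Finset.sum_add_distrib]
    have h := eφ y hy
    simp only [Lap] at h
    rw [h]; ring
  have e2 : Lap (pd a φ) x = (-1 / 4) * pd a (fun y => ∑ b : Fin 3, pd b (W b) y) x := by
    rw [← pd_const_mul _ sdiv hx, ← pd_congr eφ hx a]
    change _ = pd a (fun y => ∑ i : Fin 3, pd i (pd i φ) y) x
    simp only [Lap]
    rw [pd_sum _ (fun i _ => (hφ.sm.pd i).pd i) hx]
    refine Finset.sum_congr rfl fun i _ => ?_
    rw [pd_comm (hφ.sm.pd i) hx a i]
    exact pd_congr (fun y hy => pd_comm hφ.sm hy i a) hx i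
  rw [e1, e2]
  ring

theorem main_of_key (hK : Key) (k : ℤ) (ℓ : ℕ)
    (P : Fin (ℓ + 1) → EuclideanSpace ℝ (Fin 3) → EuclideanSpace ℝ (Fin 3))
    (hPsmooth : ∀ l, ContDiffOn ℝ (⊤ : ℕ∞) (P l)
      {x : EuclideanSpace ℝ (Fin 3) | x ≠ 0})
    (hPhom : ∀ l, ∀ t : ℝ, 0 < t → ∀ x : EuclideanSpace ℝ (Fin 3), x ≠ 0 →
      P l (t • x) = P l x) :
    ∃ W : Fin (ℓ + 3) → EuclideanSpace ℝ (Fin 3) → EuclideanSpace ℝ (Fin 3),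
      (∀ l, ContDiffOn ℝ (⊤ : ℕ∞) (W l)
        {x : EuclideanSpace ℝ (Fin 3) | x ≠ 0}) ∧
      (∀ l, ∀ t : ℝ, 0 < t → ∀ x : EuclideanSpace ℝ (Fin 3), x ≠ 0 →
        W l (t • x) = W l x) ∧
      (∀ x : EuclideanSpace ℝ (Fin 3), x ≠ 0 → ∀ a : Fin 3,
        Ldelta (fun y => (‖y‖ ^ k) •
          ∑ l : Fin (ℓ + 3), (Real.log ‖y‖) ^ (l : ℕ) • W l y) a x =
        ‖x‖ ^ (k - 2) *
          ∑ l : Fin (ℓ + 1), (Real.log ‖x‖) ^ (l : ℕ) * P l x a) := by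
  have hc : ∀ l a, Sm (fun x => P l x a) := fun l a => by
    have := (contDiffOn_euclidean (𝕜 := ℝ)).1 (hPsmooth l) a
    exact this
  have hc0 : ∀ l a, Hom0 (fun x => P l x a) := fun l a t ht x hx => by
    simp only [hPhom l t ht x hx]
  obtain ⟨V, hV, eV⟩ := solveVec hK k (ℓ + 1)
    (fun a x => ∑ l : Fin (ℓ + 1), 1 * (‖x‖ ^ (k - 2) * Real.log ‖x‖ ^ (l : ℕ) * P l x a))
    (fun a => PH.sum _ fun l _ => PH.term (Or.inl l.2) (hc l a) (hc0 l a))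
  choose c c1 c2 c3 using hV
  refine ⟨fun l x => WithLp.toLp 2 fun a => c a l x, fun l => ?_, fun l t ht x hx => ?_, ?_⟩
  · rw [contDiffOn_euclidean]
    exact fun a => c1 a l
  · refine congrArg (WithLp.toLp 2) ?_
    ext a
    exact c2 a l t ht x hx
  · intro x hx a
    have e := eV x hx a
    have hVe : ∀ b, ∀ y : E3, y ≠ 0 → ((‖y‖ ^ k) • ∑ l : Fin (ℓ + 3), (Real.log ‖y‖) ^ (l : ℕ) •
        (WithLp.toLp 2 fun a => c a l y : E3)) b = V b y := by
      intro b y hy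
      rw [c3 b y hy, Finset.sum_range]
      simp [Finset.mul_sum, mul_assoc]
    have e1 := Lap_congr (hVe a) hx
    simp only [Lap] at e1
    simp only [Ldelta]
    rw [e1, pd_congr (fun y hy => Finset.sum_congr rfl fun b _ => pd_congr (hVe b) hy b) hx]
    simp only [Lap] at e
    rw [e, Finset.mul_sum]
    exact Finset.sum_congr rfl fun l _ => by ring


section legendre
open Polynomial

theorem exists_seq (k : ℕ) (b : ℕ → ℝ) (hb : ∀ j, k ≤ j → b j = 0) (c0 : ℝ) :
    ∃ q : ℕ → ℝ, q 0 = c0 ∧ (∀ j, k < j → q j = 0) ∧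
      ∀ j : ℕ, 2 * ((j : ℝ) + 1) ^ 2 * q (j + 1) + ((k : ℝ) * (k + 1) - j * (j + 1)) * q j = b j := by
  let q : ℕ → ℝ := fun n => Nat.rec c0
    (fun j qj => (b j - ((k : ℝ) * (k + 1) - j * (j + 1)) * qj) / (2 * ((j : ℝ) + 1) ^ 2)) n
  have hq : ∀ j, q (j + 1) =
      (b j - ((k : ℝ) * (k + 1) - j * (j + 1)) * q j) / (2 * ((j : ℝ) + 1) ^ 2) := fun j => rfl
  refine ⟨q, rfl, ?_, ?_⟩
  · intro j hj
    obtain ⟨d, rfl⟩ := Nat.exists_eq_add_of_lt hj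
    clear hj
    induction d with
    | zero => rw [hq, hb _ (by omega)]; simp
    | succ d ih =>
      rw [show k + (d + 1) + 1 = (k + d + 1) + 1 by ring, hq, ih, hb _ (by omega)]; simp
  · intro j
    rw [hq]
    have : (j : ℝ) + 1 ≠ 0 := by positivity
    field_simp
    ring

theorem exists_poly (k : ℕ) (B : ℝ[X]) (hb : ∀ j, k ≤ j → B.coeff j = 0) (c0 : ℝ) :
    ∃ q : ℝ[X], q.coeff 0 = c0 ∧ (∀ j, k < j → q.coeff j = 0) ∧
      X * (2 - X) * derivative (derivative q) + 2 * (1 - X) * derivative q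
        + C ((k : ℝ) * (k + 1)) * q = B := by
  obtain ⟨q, h0, h1, h2⟩ := exists_seq k B.coeff hb c0
  let Q : ℝ[X] := ∑ j ∈ Finset.range (k + 1), monomial j (q j)
  have hQ : ∀ j, Q.coeff j = q j := by
    intro j
    simp only [Q, finsetSum_coeff, coeff_monomial]
    simp
    intro h; exact (h1 j (by omega)).symm
  refine ⟨Q, by rw [hQ, h0], fun j hj => by rw [hQ, h1 j hj], ?_⟩
  ext j
  rw [← h2 j, ← hQ, ← hQ]
  have e : X * (2 - X) * derivative (derivative Q) + 2 * (1 - X) * derivative Q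
        + C ((k : ℝ) * (k + 1)) * Q = C 2 * (X * derivative (derivative Q)) -
        X * (X * derivative (derivative Q)) + C 2 * derivative Q - C 2 * (X * derivative Q)
        + C ((k : ℝ) * (k + 1)) * Q := by
    rw [show (C (2 : ℝ) : ℝ[X]) = 2 from rfl]
    ring
  rw [e]
  simp only [coeff_add, coeff_sub, coeff_C_mul]
  rcases j with _ | _ | j
  · simp [coeff_derivative]
  · simp [coeff_derivative, coeff_X_mul]; ring
  · simp [coeff_derivative, coeff_X_mul]; ring

theorem exists_legendre (k : ℕ) : ∃ P q : ℝ[X], P.eval 0 = 1 ∧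
    X * (2 - X) * derivative (derivative P) + 2 * (1 - X) * derivative P
        + C ((k : ℝ) * (k + 1)) * P = 0 ∧
    X * (2 - X) * derivative (derivative q) + 2 * (1 - X) * derivative q
        + C ((k : ℝ) * (k + 1)) * q = -(2 * (2 - X) * derivative P) - C (2 * (k : ℝ)) * P := by
  obtain ⟨P, h0, h1, h2⟩ := exists_poly k 0 (by simp) 1
  obtain ⟨q, -, -, h3⟩ := exists_poly k (-(2 * (2 - X) * derivative P) - C (2 * (k : ℝ)) * P) (by
    intro j hj
    have e : -(2 * (2 - X) * derivative P) - C (2 * (k : ℝ)) * P =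
       C 2 * (X * derivative P) - C 4 * derivative P - C (2 * (k : ℝ)) * P := by
      rw [show (C (2 : ℝ) : ℝ[X]) = 2 from rfl, show (C (4 : ℝ) : ℝ[X]) = 4 from rfl]
      ring
    rw [e]
    simp only [coeff_sub, coeff_C_mul]
    rcases j with _ | j
    · have : k = 0 := by omega
      subst this
      simp [coeff_derivative, h1]
    · simp [coeff_derivative, h1 (j + 1 + 1) (by omega)]
      rcases Nat.lt_or_ge k (j + 1) with h | h
      · simp [h1 _ h]
      · have : k = j + 1 := by omega
        rw [this]; push_cast; ring) 0
  exact ⟨P, q, by rw [← h0, coeff_zero_eq_eval_zero], h2, h3⟩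

/-- The (regularised) kernel profile. -/
noncomputable def GG (P q : ℝ[X]) (σ z : ℝ) : ℝ := P.eval z * Real.log (z + σ) + q.eval z

/-- First derivative of the kernel profile. -/
noncomputable def GG1 (P q : ℝ[X]) (σ z : ℝ) : ℝ :=
  (derivative P).eval z * Real.log (z + σ) + P.eval z * (z + σ)⁻¹ + (derivative q).eval z

/-- Second derivative of the kernel profile. -/
noncomputable def GG2 (P q : ℝ[X]) (σ z : ℝ) : ℝ :=
  (derivative (derivative P)).eval z * Real.log (z + σ) + 2 * ((derivative P).eval z * (z + σ)⁻¹)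
    - P.eval z * ((z + σ) ^ 2)⁻¹ + (derivative (derivative q)).eval z

theorem GG_deriv (P q : ℝ[X]) {σ z : ℝ} (h : 0 < z + σ) :
    HasDerivAt (GG P q σ) (GG1 P q σ z) z := by
  have hl : HasDerivAt (fun z => Real.log (z + σ)) (1 / (z + σ)) z :=
    ((hasDerivAt_id z).add_const σ).log h.ne'
  have := ((P.hasDerivAt z).mul hl).add (q.hasDerivAt z)
  refine this.congr_deriv ?_
  simp only [GG1, one_div]

theorem GG1_deriv (P q : ℝ[X]) {σ z : ℝ} (h : 0 < z + σ) :
    HasDerivAt (GG1 P q σ) (GG2 P q σ z) z := by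
  have hl : HasDerivAt (fun z => Real.log (z + σ)) (1 / (z + σ)) z :=
    ((hasDerivAt_id z).add_const σ).log h.ne'
  have hi : HasDerivAt (fun z => (z + σ)⁻¹) (-1 / (z + σ) ^ 2) z :=
    ((hasDerivAt_id z).add_const σ).inv h.ne'
  have := ((((derivative P).hasDerivAt z).mul hl).add ((P.hasDerivAt z).mul hi)).add
    ((derivative q).hasDerivAt z)
  refine this.congr_deriv ?_
  simp only [GG2]
  field_simp
  ring

theorem GG_ode {k : ℕ} {P q : ℝ[X]}
    (hP : X * (2 - X) * derivative (derivative P) + 2 * (1 - X) * derivative P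
        + C ((k : ℝ) * (k + 1)) * P = 0)
    (hq : X * (2 - X) * derivative (derivative q) + 2 * (1 - X) * derivative q
        + C ((k : ℝ) * (k + 1)) * q = -(2 * (2 - X) * derivative P) - C (2 * (k : ℝ)) * P)
    {σ z : ℝ} (h : 0 < z + σ) :
    z * (2 - z) * GG2 P q σ z + 2 * (1 - z) * GG1 P q σ z + (k : ℝ) * (k + 1) * GG P q σ z =
      -(2 * k + 1) * P.eval z - 2 * (2 - z) * (derivative P).eval z * (σ / (z + σ)) +
      (σ ^ 2 + 2 * σ) / (z + σ) ^ 2 * P.eval z := by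
  have h1 := congrArg (Polynomial.eval z) hP
  have h2 := congrArg (Polynomial.eval z) hq
  simp only [eval_add, eval_mul, eval_sub, eval_X, eval_C, eval_one, eval_ofNat, eval_neg,
    eval_zero] at h1 h2
  have h3 : ∀ a : ℝ, a * (z + σ)⁻¹ * (z + σ) = a := fun a => by field_simp
  simp only [GG, GG1, GG2]
  have e1 : z * (z + σ)⁻¹ = 1 - σ * (z + σ)⁻¹ := by field_simp; ring
  have e2 : ((z + σ) ^ 2)⁻¹ = (z + σ)⁻¹ ^ 2 := by rw [inv_pow]
  rw [div_eq_mul_inv, div_eq_mul_inv, e2]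
  set i := (z + σ)⁻¹
  generalize Real.log (z + σ) = lg at *
  have e3 : z * i ^ 2 = i - σ * i ^ 2 := by linear_combination i * e1
  linear_combination lg * h1 + h2 + (2 * (2 - z) * eval z (derivative P) - 2 * eval z P
      + eval z P) * e1 - (2 - z) * eval z P * e3 - (eval z P * σ) * e3
end legendre

/-- `1 - cos` of the angle between two vectors. -/
noncomputable def ZZ (x y : E3) : ℝ := 1 - inner ℝ x y / (‖x‖ * ‖y‖)

theorem ZZ_comm (x y : E3) : ZZ x y = ZZ y x := by
  simp only [ZZ, real_inner_comm, mul_comm]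

theorem ZZ_nonneg (x y : E3) : 0 ≤ ZZ x y := by
  have := abs_le.1 (abs_real_inner_div_norm_mul_norm_le_one x y)
  simp only [ZZ]; linarith [this.2]

theorem ZZ_le (x y : E3) : ZZ x y ≤ 2 := by
  have := abs_le.1 (abs_real_inner_div_norm_mul_norm_le_one x y)
  simp only [ZZ]; linarith [this.1]

theorem ZZ_smul {t : ℝ} (ht : 0 < t) (x y : E3) : ZZ (t • x) y = ZZ x y := by
  simp only [ZZ, norm_smul, real_inner_smul_left, Real.norm_of_nonneg ht.le]
  rw [mul_assoc, mul_div_mul_left _ _ ht.ne']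

theorem ZZ_isometry (R : E3 ≃ₗᵢ[ℝ] E3) (x y : E3) : ZZ (R x) (R y) = ZZ x y := by
  simp [ZZ]

theorem ZZ_contDiffAt {x y : E3} (hx : x ≠ 0) (hy : y ≠ 0) :
    ContDiffAt ℝ (⊤ : ℕ∞) (fun p : E3 × E3 => ZZ p.1 p.2) (x, y) := by
  simp only [ZZ]
  refine contDiffAt_const.sub (ContDiffAt.div ?_ (ContDiffAt.mul ?_ ?_) ?_)
  · exact contDiffAt_fst.inner ℝ contDiffAt_snd
  · exact (contDiffAt_norm ℝ hx).comp (x, y) contDiffAt_fst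
  · exact (contDiffAt_norm ℝ hy).comp (x, y) contDiffAt_snd
  · exact mul_ne_zero (norm_ne_zero_iff.2 hx) (norm_ne_zero_iff.2 hy)

theorem Sm.ZZ {y : E3} (hy : y ≠ 0) : Sm (fun x => ZZ x y) := Sm.of_at fun x hx => by
  have h : ContDiffAt ℝ (⊤ : ℕ∞) (fun x : E3 => (x, y)) x :=
    contDiffAt_id.prodMk contDiffAt_const
  have h2 := ZZ_contDiffAt hx hy
  exact ContDiffAt.comp (f := fun x : E3 => (x, y)) (g := fun p : E3 × E3 => _root_.ZZ p.1 p.2) x h2 h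

theorem inner_eq_sum (x y : E3) : inner ℝ x y = ∑ i : Fin 3, x i * y i := by
  rw [PiLp.inner_apply]
  exact Finset.sum_congr rfl fun i _ => by simp [mul_comm]

theorem ZZ_pd {x y : E3} (hx : x ≠ 0) (hy : y ≠ 0) (i : Fin 3) :
    pd i (fun x => ZZ x y) x =
      -(y i / (‖x‖ * ‖y‖)) + inner ℝ x y / (‖x‖ ^ 3 * ‖y‖) * x i := by
  have hx' := (norm_pos_iff.2 hx).ne'
  have hy' := (norm_pos_iff.2 hy).ne'
  have hinv : Sm (fun y : E3 => ‖y‖⁻¹) := Sm.of_at fun y hy =>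
    (Sm.norm.contDiffAt hy).inv (norm_pos_iff.2 hy).ne'
  have hin : Sm (fun x => inner ℝ x y) := Sm.of_at fun x _ => contDiffAt_id.inner ℝ contDiffAt_const
  have e : ∀ x : E3, x ≠ 0 → ZZ x y = 1 + (-‖y‖⁻¹) * (inner ℝ x y * ‖x‖⁻¹) := by
    intro x hx
    have hx' := (norm_pos_iff.2 hx).ne'
    simp only [ZZ]; field_simp; ring
  have e2 : pd i (fun x => inner ℝ x y) x = y i := by
    have : (fun x : E3 => inner ℝ x y) = fun x => ∑ j : Fin 3, y j * x j := by
      ext x; rw [inner_eq_sum]; exact Finset.sum_congr rfl fun j _ => mul_comm _ _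
    rw [this, pd_sum _ (fun j _ => (Sm.const _).mul (Sm.coord j)) hx]
    simp [pd_const_mul _ (Sm.coord _) hx, pd_coord]
  rw [pd_congr e hx, pd_add (Sm.const 1) ((Sm.const _).mul (hin.mul hinv)) hx, pd_const,
    pd_const_mul _ (hin.mul hinv) hx, pd_mul hin hinv hx, e2,
    pd_comp (hasDerivAt_inv hx') (Sm.norm.diff hx), pd_norm hx]
  field_simp
  ring

theorem ZZ_euler {x y : E3} (hx : x ≠ 0) (hy : y ≠ 0) :
    ∑ i : Fin 3, x i * pd i (fun x => ZZ x y) x = 0 :=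
  Hom0.euler (Sm.ZZ hy) (fun _ ht x _ => ZZ_smul ht x y) hx

theorem ZZ_grad {x y : E3} (hx : x ≠ 0) (hy : y ≠ 0) :
    ‖x‖ ^ 2 * ∑ i : Fin 3, pd i (fun x => ZZ x y) x ^ 2 = ZZ x y * (2 - ZZ x y) := by
  have hx' := (norm_pos_iff.2 hx).ne'
  have hy' := (norm_pos_iff.2 hy).ne'
  have e : ∀ i : Fin 3, pd i (fun x => ZZ x y) x ^ 2 = (1 / (‖x‖ * ‖y‖)) ^ 2 * y i ^ 2
      + (inner ℝ x y / (‖x‖ ^ 3 * ‖y‖)) ^ 2 * x i ^ 2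
      - 2 * (1 / (‖x‖ * ‖y‖)) * (inner ℝ x y / (‖x‖ ^ 3 * ‖y‖)) * (x i * y i) := by
    intro i; rw [ZZ_pd hx hy]; ring
  simp only [e]
  rw [Finset.sum_sub_distrib, Finset.sum_add_distrib, ← Finset.mul_sum, ← Finset.mul_sum,
    ← Finset.mul_sum, normsq_eq, normsq_eq, ← inner_eq_sum]
  simp only [ZZ]
  field_simp
  ring

theorem ZZ_lap {x y : E3} (hx : x ≠ 0) (hy : y ≠ 0) :
    ‖x‖ ^ 2 * Lap (fun x => ZZ x y) x = 2 * (1 - ZZ x y) := by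
  have hx' := (norm_pos_iff.2 hx).ne'
  have hy' := (norm_pos_iff.2 hy).ne'
  have hinv : Sm (fun y : E3 => ‖y‖⁻¹) := Sm.of_at fun y hy =>
    (Sm.norm.contDiffAt hy).inv (norm_pos_iff.2 hy).ne'
  -- T = ‖x‖⁻¹ * (inner): use that inner = ‖x‖ * ‖y‖ * (1 - Z), which is linear
  have hZ := Sm.ZZ hy
  have hin : Sm (fun x => inner ℝ x y) := Sm.of_at fun x _ => contDiffAt_id.inner ℝ contDiffAt_const
  have e2 : ∀ i : Fin 3, ∀ x : E3, x ≠ 0 → pd i (fun x => inner ℝ x y) x = y i := by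
    intro i x hx
    have : (fun x : E3 => inner ℝ x y) = fun x => ∑ j : Fin 3, y j * x j := by
      ext x; rw [inner_eq_sum]; exact Finset.sum_congr rfl fun j _ => mul_comm _ _
    rw [this, pd_sum _ (fun j _ => (Sm.const _).mul (Sm.coord j)) hx]
    simp [pd_const_mul _ (Sm.coord _) hx, pd_coord]
  have e3 : Lap (fun x => inner ℝ x y) x = 0 := by
    simp only [Lap]
    refine Finset.sum_eq_zero fun i _ => ?_
    rw [pd_congr (e2 i) hx, pd_const]
  have hs : Sm (fun x => 1 + (-1) * ZZ x y) := (Sm.const 1).add ((Sm.const (-1)).mul hZ)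
  have hs0 : Hom0 (fun x => 1 + (-1) * ZZ x y) := fun t ht x _ => by simp only [ZZ_smul ht]
  have e4 : ∀ x : E3, x ≠ 0 → inner ℝ x y = (‖y‖ * ‖x‖) * (1 + (-1) * ZZ x y) := by
    intro x hx
    have hx' := (norm_pos_iff.2 hx).ne'
    simp only [ZZ]; field_simp; ring
  have hl : ∀ r : ℝ, 0 < r → HasDerivAt (fun r : ℝ => ‖y‖ * r) ‖y‖ r := fun r _ => by
    simpa using (hasDerivAt_id r).const_mul ‖y‖
  have e5 := Lap_radial_mul (φ := fun r => ‖y‖ * r) (φ' := fun _ => ‖y‖) hs hs0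
    ((Sm.const _).mul Sm.norm) hx hl (hasDerivAt_const _ _)
  rw [← Lap_congr e4 hx, e3, Lap_add (Sm.const 1) ((Sm.const (-1)).mul hZ) hx,
    Lap_const_mul _ hZ hx] at e5
  have e6 : Lap (fun _ => (1 : ℝ)) x = 0 := by
    simp only [Lap]
    refine Finset.sum_eq_zero fun i _ => ?_
    rw [pd_congr (g := fun _ => 0) (fun y _ => pd_const 1 i y) hx, pd_const]
  rw [e6] at e5
  field_simp at e5
  refine mul_left_cancel₀ hy' ?_
  linear_combination e5

theorem ZZ_lap_comp {φ φ' : ℝ → ℝ} {φ'' : ℝ} {x y : E3} (hx : x ≠ 0) (hy : y ≠ 0)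
    (h1 : ∀ᶠ z in 𝓝 (ZZ x y), HasDerivAt φ (φ' z) z) (h2 : HasDerivAt φ' φ'' (ZZ x y)) :
    ‖x‖ ^ 2 * Lap (fun x => φ (ZZ x y)) x =
      ZZ x y * (2 - ZZ x y) * φ'' + 2 * (1 - ZZ x y) * φ' (ZZ x y) := by
  rw [Lap_comp (Sm.ZZ hy) hx h1 h2]
  linear_combination φ'' * ZZ_grad hx hy + φ' (ZZ x y) * ZZ_lap hx hy

section param
open MeasureTheory Set
open scoped Convolution

/-- Parametric integrands: smooth on `s × univ`, vanishing for `y` outside `K`. -/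
def PF (s : Set E3) (K : Set E3) (F : E3 → E3 → ℝ) : Prop :=
  (∀ x ∈ s, ∀ y, y ∉ K → F x y = 0) ∧
    ContDiffOn ℝ (⊤ : ℕ∞) (fun p : E3 × E3 => F p.1 p.2) (s ×ˢ univ)

theorem PF.at {s K : Set E3} {F : E3 → E3 → ℝ} (h : PF s K F) (hs : IsOpen s) {x : E3}
    (hx : x ∈ s) (y : E3) : ContDiffAt ℝ (⊤ : ℕ∞) (fun p : E3 × E3 => F p.1 p.2) (x, y) :=
  h.2.contDiffAt ((hs.prod isOpen_univ).mem_nhds ⟨hx, mem_univ _⟩)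

theorem PF.pd_eq {s K : Set E3} {F : E3 → E3 → ℝ} (h : PF s K F) (hs : IsOpen s) {x : E3}
    (hx : x ∈ s) (y : E3) (i : Fin 3) : pd i (fun x => F x y) x =
      fderiv ℝ (fun p : E3 × E3 => F p.1 p.2) (x, y) (EuclideanSpace.single i 1, 0) := by
  have h1 : HasFDerivAt (fun p : E3 × E3 => F p.1 p.2) _ (x, y) :=
    ((h.at hs hx y).differentiableAt (by simp)).hasFDerivAt
  have h2 : HasFDerivAt (fun x : E3 => (x, y)) (ContinuousLinearMap.inl ℝ E3 E3) x := hasFDerivAt_prodMk_left x y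
  have h3 := (h1.comp x h2).fderiv
  simp only [pd]
  have : (fun x => F x y) = (fun p : E3 × E3 => F p.1 p.2) ∘ (fun x : E3 => (x, y)) := rfl
  rw [this, h3]
  simp

theorem PF.pd {s K : Set E3} {F : E3 → E3 → ℝ} (h : PF s K F) (hs : IsOpen s) (i : Fin 3) :
    PF s K (fun x y => pd i (fun x => F x y) x) := by
  constructor
  · intro x hx y hy
    have : (fun x => F x y) =ᶠ[𝓝 x] fun _ => 0 :=
      Filter.eventually_of_mem (hs.mem_nhds hx) fun x hx => h.1 x hx y hy
    simp [_root_.pd, this.fderiv_eq]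
  · have : ContDiffOn ℝ (⊤ : ℕ∞) (fun p : E3 × E3 =>
        fderiv ℝ (fun p : E3 × E3 => F p.1 p.2) p (EuclideanSpace.single i 1, 0)) (s ×ˢ univ) := by
      intro p hp
      have h1 := (h.at hs hp.1 p.2).fderiv_right (m := (⊤ : ℕ∞)) (by simp)
      exact (h1.clm_apply contDiffAt_const).contDiffWithinAt
    exact this.congr fun p hp => h.pd_eq hs hp.1 p.2 i

theorem PF.neg {s K : Set E3} {F : E3 → E3 → ℝ} (h : PF s K F) :
    PF s (Neg.neg ⁻¹' K) (fun x z => F x (-z)) := by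
  refine ⟨fun x hx y hy => h.1 x hx _ hy, ?_⟩
  exact h.2.comp (g := fun p : E3 × E3 => F p.1 p.2) (f := fun p : E3 × E3 => (p.1, -p.2))
    (by fun_prop) (fun p hp => ⟨hp.1, mem_univ _⟩)

theorem isCompact_negK {K : Set E3} (hK : IsCompact K) : IsCompact (Neg.neg ⁻¹' K) := by
  have : (Neg.neg ⁻¹' K) = Neg.neg '' K := by simp
  rw [this]; exact hK.image continuous_neg

theorem PF.contDiffOn {s K : Set E3} {F : E3 → E3 → ℝ} (h : PF s K F) (hs : IsOpen s)
    (hK : IsCompact K) {f : E3 → ℝ} (hf : LocallyIntegrable f volume) :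
    ContDiffOn ℝ (⊤ : ℕ∞) (fun x => ∫ y, f y * F x y) s := by
  have h1 := contDiffOn_convolution_right_with_param (μ := (volume : Measure E3))
    (ContinuousLinearMap.mul ℝ ℝ) (g := fun x z => F x (-z)) hs (isCompact_negK hK)
    (fun p x hp hx => h.neg.1 p hp x hx) hf h.neg.2
  have h2 : ContDiffOn ℝ (⊤ : ℕ∞) (fun x : E3 => (x, (0 : E3))) s := by fun_prop
  have h3 := h1.comp h2 (fun x hx => ⟨hx, mem_univ _⟩)
  refine h3.congr fun x _ => ?_
  simp [convolution]

theorem PF.integrable {s K : Set E3} {F : E3 → E3 → ℝ} (h : PF s K F) (hs : IsOpen s)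
    (hK : IsCompact K) {f : E3 → ℝ} (hf : LocallyIntegrable f volume) {x : E3} (hx : x ∈ s) :
    Integrable (fun y => f y * F x y) := by
  have hc : Continuous (F x) := by
    refine continuous_iff_continuousAt.2 fun y => ?_
    exact ContinuousAt.comp (f := fun y : E3 => (x, y)) (g := fun p : E3 × E3 => F p.1 p.2)
      (h.at hs hx y).continuousAt (by fun_prop)
  have hsupp : HasCompactSupport (F x) := HasCompactSupport.intro hK fun y hy => h.1 x hx y hy
  exact hf.integrable_smul_right_of_hasCompactSupport hc hsupp

theorem PF.pd_integral {s K : Set E3} {F : E3 → E3 → ℝ} (h : PF s K F) (hs : IsOpen s)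
    (hK : IsCompact K) {f : E3 → ℝ} (hf : LocallyIntegrable f volume) {x : E3} (hx : x ∈ s)
    (i : Fin 3) :
    _root_.pd i (fun x => ∫ y, f y * F x y) x =
      ∫ y, f y * _root_.pd i (fun x => F x y) x := by
  have h1 := hasFDerivAt_convolution_right_with_param (μ := (volume : Measure E3))
    (ContinuousLinearMap.mul ℝ ℝ) (g := fun x z => F x (-z)) hs (isCompact_negK hK)
    (fun p x hp hx => h.neg.1 p hp x hx) hf (h.neg.2.of_le (by simp)) (x, 0) hx
  have h2 : HasFDerivAt (fun x : E3 => (x, (0 : E3))) (ContinuousLinearMap.inl ℝ E3 E3) x := hasFDerivAt_prodMk_left x 0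
  have h3 := (h1.comp x h2).fderiv
  have e : (fun x => ∫ y, f y * F x y) = (fun q : E3 × E3 =>
      (f ⋆[ContinuousLinearMap.mul ℝ ℝ, volume] (fun z => F q.1 (-z))) q.2) ∘
        (fun x : E3 => (x, (0 : E3))) := by
    ext x; simp [convolution]
  rw [_root_.pd, e, h3]
  simp only [convolution, ContinuousLinearMap.comp_apply]
  rw [ContinuousLinearMap.integral_apply]
  · refine integral_congr_ae (Filter.Eventually.of_forall fun y => ?_)
    have h4 := h.neg.pd_eq hs hx (-y) i
    simp only [neg_neg] at h4
    simp only [h4]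
    simp
    left
    rfl
  · have hcf : Continuous (fun z : E3 => fderiv ℝ (fun p : E3 × E3 => F p.1 (-p.2)) (x, z)) := by
      refine continuous_iff_continuousAt.2 fun y => ?_
      have := (h.neg.at hs hx y).continuousAt_fderiv (by simp)
      exact ContinuousAt.comp (f := fun y : E3 => (x, y)) this (by fun_prop)
    have hsupp : HasCompactSupport
        (fun z : E3 => fderiv ℝ (fun p : E3 × E3 => F p.1 (-p.2)) (x, z)) := by
      refine HasCompactSupport.intro (isCompact_negK hK) fun z hz => ?_
      have : (fun p : E3 × E3 => F p.1 (-p.2)) =ᶠ[𝓝 (x, z)] fun _ => 0 := by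
        have ho : IsOpen (s ×ˢ (Neg.neg ⁻¹' K)ᶜ) :=
          hs.prod (isCompact_negK hK).isClosed.isOpen_compl
        exact Filter.eventually_of_mem (ho.mem_nhds ⟨hx, hz⟩) fun p hp => h.neg.1 _ hp.1 _ hp.2
      simp [this.fderiv_eq]
    exact hsupp.convolutionExists_right _ hf hcf 0

theorem pd_congr_open {s : Set E3} (hs : IsOpen s) {f g : E3 → ℝ} (h : ∀ x ∈ s, f x = g x)
    {x : E3} (hx : x ∈ s) (i : Fin 3) : pd i f x = pd i g x := by
  have : f =ᶠ[𝓝 x] g := Filter.eventually_of_mem (hs.mem_nhds hx) h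
  simp only [pd, this.fderiv_eq]

theorem Lap_congr_open {s : Set E3} (hs : IsOpen s) {f g : E3 → ℝ} (h : ∀ x ∈ s, f x = g x)
    {x : E3} (hx : x ∈ s) : Lap f x = Lap g x :=
  Finset.sum_congr rfl fun i _ =>
    pd_congr_open hs (fun _ hy => pd_congr_open hs h hy i) hx i

theorem PF.lap {s K : Set E3} {F : E3 → E3 → ℝ} (h : PF s K F) (hs : IsOpen s) :
    PF s K (fun x y => Lap (fun x => F x y) x) := by
  constructor
  · intro x hx y hy
    exact Finset.sum_eq_zero fun i _ => ((h.pd hs i).pd hs i).1 x hx y hy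
  · exact ContDiffOn.sum fun i _ => ((h.pd hs i).pd hs i).2

theorem PF.lap_integral {s K : Set E3} {F : E3 → E3 → ℝ} (h : PF s K F) (hs : IsOpen s)
    (hK : IsCompact K) {f : E3 → ℝ} (hf : LocallyIntegrable f volume) {x : E3} (hx : x ∈ s) :
    Lap (fun x => ∫ y, f y * F x y) x = ∫ y, f y * Lap (fun x => F x y) x := by
  simp only [Lap, Finset.mul_sum]
  rw [integral_finsetSum _ fun i _ => ((h.pd hs i).pd hs i).integrable hs hK hf hx]
  refine Finset.sum_congr rfl fun i _ => ?_
  rw [pd_congr_open hs (fun x hx => h.pd_integral hs hK hf hx i) hx,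
    (h.pd hs i).pd_integral hs hK hf hx]
end param

section refl
open MeasureTheory Set

/-- The closed annulus. -/
def ann : Set E3 := {y | 1 ≤ ‖y‖ ∧ ‖y‖ ≤ 2}

theorem ann_compact : IsCompact ann := by
  have h : IsClosed ann := by
    apply IsClosed.inter
    · exact isClosed_le continuous_const continuous_norm
    · exact isClosed_le continuous_norm continuous_const
  refine (isCompact_closedBall (0 : E3) 2).of_isClosed_subset h fun y hy => ?_
  simpa using hy.2

theorem ann_ne {y : E3} (hy : y ∈ ann) : y ≠ 0 := by
  rintro rfl
  have := hy.1
  simp at this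
  linarith

/-- Reflection with respect to the hyperplane orthogonal to `x/‖x‖ - e`. -/
noncomputable def RR (e x : E3) : E3 ≃ₗᵢ[ℝ] E3 :=
  Submodule.reflection (Submodule.span ℝ {‖x‖⁻¹ • x - e})ᗮ

theorem RR_apply (e x y : E3) : RR e x y =
    y - (2 * (inner ℝ (‖x‖⁻¹ • x - e) y / ‖‖x‖⁻¹ • x - e‖ ^ 2)) • (‖x‖⁻¹ • x - e) := by
  rw [RR, Submodule.reflection_orthogonal_apply, Submodule.reflection_singleton_apply]
  simp only [RCLike.ofReal_real_eq_id, id]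
  rw [neg_sub, mul_smul, two_smul, two_smul]

theorem RR_RR (e x y : E3) : RR e x (RR e x y) = y := Submodule.reflection_reflection _ _

theorem RR_self {e x : E3} (he : ‖e‖ = 1) (hx : x ≠ 0) : RR e x x = ‖x‖ • e := by
  have hx' := (norm_pos_iff.2 hx).ne'
  have h : ‖‖x‖⁻¹ • x‖ = ‖e‖ := by rw [norm_smul, he]; simp [hx']
  have h1 : RR e x (‖x‖⁻¹ • x) = e := Submodule.reflection_sub h
  calc RR e x x = RR e x (‖x‖ • (‖x‖⁻¹ • x)) := by rw [smul_smul, mul_inv_cancel₀ hx', one_smul]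
    _ = _ := by rw [map_smul, h1]

/-- Domain of the reflection construction. -/
def UU (e : E3) : Set E3 := {x | x ≠ 0 ∧ ‖x‖⁻¹ • x - e ≠ 0}

theorem UU_open (e : E3) : IsOpen (UU e) := by
  have h : ContinuousOn (fun x : E3 => ‖x‖⁻¹ • x - e) {x : E3 | x ≠ 0} := by
    intro x hx
    have : ‖x‖ ≠ 0 := norm_ne_zero_iff.2 hx
    exact (((continuousAt_id.norm).inv₀ this).smul continuousAt_id
      |>.sub continuousAt_const).continuousWithinAt
  exact h.isOpen_inter_preimage isOpenN (isOpen_ne (x := (0 : E3)))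

theorem UU_cover {e x : E3} (he : ‖e‖ = 1) (hx : x ≠ 0) : x ∈ UU e ∨ x ∈ UU (-e) := by
  by_contra! h
  simp only [UU, mem_ofPred_eq, not_and, not_not] at h
  have h1 := h.1 hx
  have h2 := h.2 hx
  have : (2 : ℝ) • e = 0 := by
    rw [two_smul]
    have h3 : e + e = (‖x‖⁻¹ • x - -e) - (‖x‖⁻¹ • x - e) := by abel
    rw [h3, h1, h2, sub_zero]
  have h3 : e = 0 := by simpa using this
  rw [h3] at he
  simp at he

theorem RR_PF (e : E3) {Q : E3 → ℝ} (hQ : ContDiff ℝ (⊤ : ℕ∞) Q) (hQ0 : ∀ y, y ∉ ann → Q y = 0) :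
    PF (UU e) ann (fun x y => Q (RR e x y)) := by
  constructor
  · intro x _ y hy
    apply hQ0
    intro h
    apply hy
    simpa [ann] using h
  · intro p hp
    apply ContDiffAt.contDiffWithinAt
    refine hQ.contDiffAt.comp p ?_
    simp only [RR_apply]
    have hx : p.1 ≠ 0 := hp.1.1
    have hw : ‖‖p.1‖⁻¹ • p.1 - e‖ ^ 2 ≠ 0 := pow_ne_zero _ (norm_ne_zero_iff.2 hp.1.2)
    have h1 : ContDiffAt ℝ (⊤ : ℕ∞) (fun p : E3 × E3 => ‖p.1‖⁻¹ • p.1 - e) p := by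
      have h2 : ContDiffAt ℝ (⊤ : ℕ∞) (fun p : E3 × E3 => ‖p.1‖) p :=
        (contDiffAt_norm ℝ hx).comp p contDiffAt_fst
      exact ((h2.inv (norm_ne_zero_iff.2 hx)).smul contDiffAt_fst).sub contDiffAt_const
    refine contDiffAt_snd.sub (ContDiffAt.smul (contDiffAt_const.mul
      (ContDiffAt.div (h1.inner ℝ contDiffAt_snd) (h1.norm_sq ℝ) hw)) h1)

theorem RR_change {e x : E3} (he : ‖e‖ = 1) (hx : x ≠ 0) (g : ℝ → ℝ) (Q : E3 → ℝ) :
    ∫ y, g (ZZ x y) * Q y = ∫ y, g (ZZ e y) * Q (RR e x y) := by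
  have h := (RR e x).measurePreserving.integral_comp (RR e x).toHomeomorph.measurableEmbedding
    (fun y => g (ZZ x y) * Q y)
  rw [← h]
  refine integral_congr_ae (Filter.Eventually.of_forall fun y => ?_)
  simp only
  have h1 := ZZ_isometry (RR e x) x (RR e x y)
  rw [RR_RR, RR_self he hx, ZZ_smul (norm_pos_iff.2 hx)] at h1
  rw [← h1]

/-- The polar axis vectors. -/
noncomputable def pole (c : ℝ) : E3 := EuclideanSpace.single 2 c

theorem pole_norm {c : ℝ} (hc : c ^ 2 = 1) : ‖pole c‖ = 1 := by
  rw [pole, PiLp.norm_single, Real.norm_eq_abs]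
  rcases (sq_eq_sq_iff_eq_or_eq_neg.1 (hc.trans (one_pow 2).symm)) with h | h <;> simp [h]

theorem ZZ_pole {c : ℝ} (hc : c ^ 2 = 1) {y : E3} (hy : y ≠ 0) :
    y 0 ^ 2 / (2 * ‖y‖ ^ 2) ≤ ZZ (pole c) y := by
  have hn := norm_pos_iff.2 hy
  have h1 : inner ℝ (pole c) y = c * y 2 := by
    simp [pole, EuclideanSpace.inner_single_left]
  have h2 := normsq_eq y
  rw [Fin.sum_univ_three] at h2
  rw [ZZ, pole_norm hc, h1, one_mul, div_le_iff₀ (by positivity)]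
  have h3 : (1 - c * y 2 / ‖y‖) * (2 * ‖y‖ ^ 2) = 2 * ‖y‖ ^ 2 - 2 * c * y 2 * ‖y‖ := by
    field_simp
  rw [h3]
  nlinarith [sq_nonneg (‖y‖ - c * y 2), sq_nonneg (y 1)]

/-- Dominating function. -/
noncomputable def DD (y : E3) : ℝ := ann.indicator (fun y => 7 + 2 * |Real.log (y 0)|) y

theorem DD_integrable : Integrable DD := by
  let g : Fin 3 → ℝ → ℝ := ![(Icc (-2) 2).indicator (fun t => 7 + 2 * |Real.log t|),
    (Icc (-2) 2).indicator 1, (Icc (-2) 2).indicator 1]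
  have h1 : Integrable ((Icc (-2 : ℝ) 2).indicator (1 : ℝ → ℝ)) :=
    (integrable_indicator_iff measurableSet_Icc).2 (integrableOn_const (by simp))
  have h0 : Integrable ((Icc (-2 : ℝ) 2).indicator (fun t => 7 + 2 * |Real.log t|)) := by
    rw [integrable_indicator_iff measurableSet_Icc]
    have h := (intervalIntegral.intervalIntegrable_log' (a := -2) (b := 2))
    rw [intervalIntegrable_iff_integrableOn_Icc_of_le (by norm_num)] at h
    exact (integrableOn_const (by simp)).add (h.abs.const_mul 2)
  have hg : ∀ i, Integrable (g i) := by
    intro i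
    fin_cases i
    · exact h0
    · exact h1
    · exact h1
  have h2 : Integrable (fun y : Fin 3 → ℝ => ∏ i, g i (y i)) := Integrable.fintype_prod hg
  have h3 : Integrable (fun y : E3 => ∏ i, g i (y i)) :=
    (PiLp.volume_preserving_ofLp (Fin 3)).integrable_comp_of_integrable h2
  refine h3.mono' ?_ (Filter.Eventually.of_forall fun y => ?_)
  · refine (Measurable.indicator ?_ ann_compact.measurableSet).aestronglyMeasurable
    have : Measurable (fun y : E3 => y 0) := by fun_prop
    exact measurable_const.add ((Real.measurable_log.comp this).abs.const_mul 2)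
  · have hnn : ∀ y : E3, 0 ≤ 7 + 2 * |Real.log (y 0)| := fun y => by positivity
    by_cases hy : y ∈ ann
    · have hi : ∀ i, y i ∈ Icc (-2 : ℝ) 2 := fun i => by
        have := (PiLp.norm_apply_le y i).trans hy.2
        rwa [Real.norm_eq_abs, abs_le] at this
      simp only [DD, indicator_of_mem hy, Fin.prod_univ_three]
      rw [Real.norm_of_nonneg (hnn y)]
      simp [g, indicator_of_mem (hi _)]
    · simp only [DD, indicator_of_notMem hy, norm_zero]
      refine Finset.prod_nonneg fun i _ => ?_
      have hp : ∀ t : ℝ, 0 ≤ 7 + 2 * |Real.log t| := fun t => by positivity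
      fin_cases i
      · exact indicator_nonneg (fun t _ => hp t) _
      · exact indicator_nonneg (fun t _ => by simp) _
      · exact indicator_nonneg (fun t _ => by simp) _

theorem ae_ne : ∀ᵐ y : E3, y 0 ≠ 0 := by
  have h := Measure.addHaar_submodule (volume : Measure E3)
    (LinearMap.ker (EuclideanSpace.proj 0 : E3 →L[ℝ] ℝ).toLinearMap) (by
      rw [Ne, LinearMap.ker_eq_top]
      intro h
      have := congrArg (fun f => f (EuclideanSpace.single 0 1)) h
      simp at this)
  rw [ae_iff]
  convert h using 2
  ext y
  simp

theorem log_bound {c : ℝ} (hc : c ^ 2 = 1) {y : E3} (hy : y ∈ ann) (h0 : y 0 ≠ 0) {σ : ℝ}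
    (hσ : 0 ≤ σ) (hσ1 : σ ≤ 1) : |Real.log (ZZ (pole c) y + σ)| ≤ 7 + 2 * |Real.log (y 0)| := by
  have hn := norm_pos_iff.2 (ann_ne hy)
  have h1 := ZZ_pole hc (ann_ne hy)
  have h2 := ZZ_le (pole c) y
  have hy0 : 0 < y 0 ^ 2 := by positivity
  have h3 : y 0 ^ 2 / 8 ≤ y 0 ^ 2 / (2 * ‖y‖ ^ 2) := by
    apply div_le_div_of_nonneg_left hy0.le (by positivity)
    nlinarith [hy.2, hy.1]
  have hpos : 0 < ZZ (pole c) y + σ := by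
    have : 0 < y 0 ^ 2 / 8 := by positivity
    linarith
  rw [abs_le]
  constructor
  · have h4 : Real.log (y 0 ^ 2 / 8) ≤ Real.log (ZZ (pole c) y + σ) :=
      Real.log_le_log (by positivity) (by linarith)
    rw [Real.log_div hy0.ne' (by norm_num), Real.log_pow] at h4
    have h5 := Real.log_le_sub_one_of_pos (show (0:ℝ) < 8 by norm_num)
    have h6 := neg_abs_le (Real.log (y 0))
    push_cast at h4
    linarith
  · have h5 := Real.log_le_sub_one_of_pos hpos
    have h6 := abs_nonneg (Real.log (y 0))
    linarith

theorem ZZ_pole_pos {c : ℝ} (hc : c ^ 2 = 1) {y : E3} (h0 : y 0 ≠ 0) : 0 < ZZ (pole c) y := by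
  have hy : y ≠ 0 := by rintro rfl; simp at h0
  have hn := norm_pos_iff.2 hy
  refine lt_of_lt_of_le ?_ (ZZ_pole hc hy)
  positivity
end refl

section kernel
open MeasureTheory Set Polynomial

theorem ann_compl_nhds {y : E3} (hy : y ∉ ann) : annᶜ ∈ 𝓝 y :=
  ann_compact.isClosed.isOpen_compl.mem_nhds hy

theorem ZZ_cont {x y : E3} (hx : x ≠ 0) (hy : y ≠ 0) : ContinuousAt (fun y => ZZ x y) y :=
  ContinuousAt.comp (f := fun y : E3 => (x, y)) (g := fun p : E3 × E3 => ZZ p.1 p.2)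
    (ZZ_contDiffAt hx hy).continuousAt (by fun_prop)

theorem ZZ_meas (x : E3) : Measurable (fun y => ZZ x y) := by
  unfold ZZ
  fun_prop

theorem ZZ_int {x : E3} (hx : x ≠ 0) {φ : ℝ → ℝ} (hφ : ∀ z, 0 ≤ z → ContinuousAt φ z)
    {Q : E3 → ℝ} (hQ : Continuous Q) (hQ0 : ∀ y, y ∉ ann → Q y = 0) :
    Integrable (fun y => φ (ZZ x y) * Q y) := by
  have hc : Continuous (fun y => φ (ZZ x y) * Q y) := by
    refine continuous_iff_continuousAt.2 fun y => ?_
    by_cases hy : y ∈ ann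
    · exact (ContinuousAt.comp (f := fun y => ZZ x y) (hφ _ (ZZ_nonneg x y))
        (ZZ_cont hx (ann_ne hy))).mul hQ.continuousAt
    · have : (fun y => φ (ZZ x y) * Q y) =ᶠ[𝓝 y] fun _ => 0 :=
        Filter.eventually_of_mem (ann_compl_nhds hy) fun z hz => by simp [hQ0 z hz]
      exact continuousAt_const.congr this.symm
  exact hc.integrable_of_hasCompactSupport
    (HasCompactSupport.intro ann_compact fun y hy => by simp [hQ0 y hy])

theorem ZPF {g : ℝ → ℝ} (hg : ∀ z, 0 ≤ z → ContDiffAt ℝ (⊤ : ℕ∞) g z) {Q : E3 → ℝ}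
    (hQ : ContDiff ℝ (⊤ : ℕ∞) Q) (hQ0 : ∀ y, y ∉ ann → Q y = 0) :
    PF {x : E3 | x ≠ 0} ann (fun x y => g (ZZ x y) * Q y) := by
  refine ⟨fun x _ y hy => by simp [hQ0 y hy], ?_⟩
  rintro ⟨x, y⟩ hp
  apply ContDiffAt.contDiffWithinAt
  have hx : x ≠ 0 := hp.1
  by_cases hy : y ∈ ann
  · refine ContDiffAt.mul ?_ (hQ.contDiffAt.comp (x, y) contDiffAt_snd)
    exact ContDiffAt.comp (f := fun p : E3 × E3 => ZZ p.1 p.2) (x, y) (hg _ (ZZ_nonneg x y))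
      (ZZ_contDiffAt hx (ann_ne hy))
  · have : (fun p : E3 × E3 => g (ZZ p.1 p.2) * Q p.2) =ᶠ[𝓝 (x, y)] fun _ => 0 := by
      have h2 : ContinuousAt (fun p : E3 × E3 => p.2) (x, y) := by fun_prop
      filter_upwards [h2.preimage_mem_nhds (ann_compl_nhds hy)] with p hp2
      simp [hQ0 _ hp2]
    exact contDiffAt_const.congr_of_eventuallyEq this

theorem ker_lap {g g' g'' : ℝ → ℝ} {δ : ℝ} (hδ : 0 < δ)
    (hg : ∀ z, 0 ≤ z → ContDiffAt ℝ (⊤ : ℕ∞) g z)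
    (h1 : ∀ z, -δ < z → HasDerivAt g (g' z) z) (h2 : ∀ z, -δ < z → HasDerivAt g' (g'' z) z)
    {Q : E3 → ℝ} (hQ : ContDiff ℝ (⊤ : ℕ∞) Q) (hQ0 : ∀ y, y ∉ ann → Q y = 0) {x : E3}
    (hx : x ≠ 0) :
    ‖x‖ ^ 2 * Lap (fun x => ∫ y, g (ZZ x y) * Q y) x =
      ∫ y, (ZZ x y * (2 - ZZ x y) * g'' (ZZ x y) + 2 * (1 - ZZ x y) * g' (ZZ x y)) * Q y := by
  have hP := ZPF hg hQ hQ0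
  have h := hP.lap_integral isOpenN ann_compact (f := fun _ => 1) (locallyIntegrable_const 1) hx
  simp only [one_mul] at h
  rw [h, ← integral_const_mul]
  refine integral_congr_ae (Filter.Eventually.of_forall fun y => ?_)
  simp only
  by_cases hy : y ∈ ann
  · have hy' := ann_ne hy
    have hz := ZZ_nonneg x y
    have e := ZZ_lap_comp (φ := g) (φ' := g') (φ'' := g'' (ZZ x y)) hx hy'
      (Filter.eventually_of_mem (isOpen_Ioi.mem_nhds (show -δ < ZZ x y by linarith)) h1)
      (h2 _ (by linarith))
    have hS : Sm (fun x => g (ZZ x y)) := Sm.of_at fun x hx =>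
      ContDiffAt.comp x (hg _ (ZZ_nonneg x y)) ((Sm.ZZ hy').contDiffAt hx)
    have e2 : Lap (fun x => g (ZZ x y) * Q y) x = Q y * Lap (fun x => g (ZZ x y)) x := by
      simp only [mul_comm _ (Q y)]
      exact Lap_const_mul _ hS hx
    rw [e2, ← e]; ring
  · have : (fun x => g (ZZ x y) * Q y) = fun _ => 0 := by
      ext x; simp [hQ0 y hy]
    rw [this, hQ0 y hy, mul_zero]
    have e2 : ∀ i, ∀ a : ℝ, pd i (fun _ : E3 => a) = fun _ => 0 := by
      intro i a; ext x; exact pd_const a i x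
    simp [Lap, e2]

theorem ker_sm {g : ℝ → ℝ} (hg : ∀ z, 0 ≤ z → ContDiffAt ℝ (⊤ : ℕ∞) g z) {Q : E3 → ℝ}
    (hQ : ContDiff ℝ (⊤ : ℕ∞) Q) (hQ0 : ∀ y, y ∉ ann → Q y = 0) :
    Sm (fun x => ∫ y, g (ZZ x y) * Q y) := by
  have h := (ZPF hg hQ hQ0).contDiffOn isOpenN ann_compact (f := fun _ => 1)
    (locallyIntegrable_const 1)
  simp only [one_mul] at h
  exact h

theorem ker_hom (g : ℝ → ℝ) (Q : E3 → ℝ) : Hom0 (fun x => ∫ y, g (ZZ x y) * Q y) := by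
  intro t ht x _
  simp only [ZZ_smul ht]

theorem mass {σ : ℝ} (hσ : 0 < σ) {ψ : E3 → ℝ} (hψ : ContDiff ℝ (⊤ : ℕ∞) ψ)
    (hψ0 : ∀ y, y ∉ ann → ψ y = 0) (hrad : ∀ y y' : E3, ‖y‖ = ‖y'‖ → ψ y = ψ y') {x : E3}
    (hx : x ≠ 0) : ∫ y, (σ ^ 2 + 2 * σ) / (ZZ x y + σ) ^ 2 * ψ y = ∫ y, ψ y := by
  have hg : ∀ z, 0 ≤ z → ContDiffAt ℝ (⊤ : ℕ∞) (fun z => Real.log (z + σ)) z := fun z hz =>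
    (contDiffAt_id.add contDiffAt_const).log (by simp; linarith)
  have h := ker_lap (g := fun z => Real.log (z + σ)) (g' := fun z => 1 / (z + σ))
    (g'' := fun z => -1 / (z + σ) ^ 2) hσ hg
    (fun z hz => ((hasDerivAt_id z).add_const σ).log (by simp; linarith))
    (fun z hz => by
      have hne : z + σ ≠ 0 := by linarith
      have := ((hasDerivAt_id z).add_const σ).inv hne
      simp only [one_div]
      exact this) hψ hψ0 hx
  have hconst : ∀ c : ℝ, c ^ 2 = 1 → x ∈ UU (pole c) →
      Lap (fun x => ∫ y, Real.log (ZZ x y + σ) * ψ y) x = 0 := by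
    intro c hc hxc
    have e : ∀ x ∈ UU (pole c), ∫ y, Real.log (ZZ x y + σ) * ψ y =
        ∫ y, Real.log (ZZ (pole c) y + σ) * ψ y := by
      intro x hx
      rw [RR_change (pole_norm hc) hx.1 (fun z => Real.log (z + σ))]
      refine integral_congr_ae (Filter.Eventually.of_forall fun y => ?_)
      simp only
      rw [hrad (RR (pole c) x y) y (by simp)]
    rw [Lap_congr_open (UU_open _) e hxc]
    have e2 : ∀ i, ∀ a : ℝ, pd i (fun _ : E3 => a) = fun _ => 0 := by
      intro i a; ext x; exact pd_const a i x
    simp [Lap, e2]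
  have h0 : Lap (fun x => ∫ y, Real.log (ZZ x y + σ) * ψ y) x = 0 := by
    rcases UU_cover (pole_norm (c := 1) (by norm_num)) hx with h | h
    · exact hconst 1 (by norm_num) h
    · refine hconst (-1) (by norm_num) ?_
      have : pole (-1) = -pole 1 := by ext i; fin_cases i <;> simp [pole]
      rwa [this]
  rw [h0, mul_zero] at h
  have hK : Integrable (fun y => (σ ^ 2 + 2 * σ) / (ZZ x y + σ) ^ 2 * ψ y) :=
    ZZ_int hx (φ := fun z => (σ ^ 2 + 2 * σ) / (z + σ) ^ 2) (fun z hz => by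
      refine continuousAt_const.div (by fun_prop) ?_
      have : 0 < z + σ := by linarith
      positivity) hψ.continuous hψ0
  have hI : Integrable ψ := hψ.continuous.integrable_of_hasCompactSupport
    (HasCompactSupport.intro ann_compact hψ0)
  rw [← sub_eq_zero, ← integral_sub hK hI, h]
  refine integral_congr_ae (Filter.Eventually.of_forall fun y => ?_)
  have : ZZ x y + σ ≠ 0 := by have := ZZ_nonneg x y; linarith
  simp only
  field_simp
  ring
end kernel

section limits
open MeasureTheory Set Polynomial Filter

theorem poly_bound (P : ℝ[X]) : ∃ C, 0 ≤ C ∧ ∀ z, 0 ≤ z → z ≤ 2 → |P.eval z| ≤ C := by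
  obtain ⟨C, hC⟩ := (isCompact_Icc (a := (0 : ℝ)) (b := 2)).exists_bound_of_continuousOn
    (f := fun z => P.eval z) P.continuous.continuousOn
  exact ⟨C, (norm_nonneg _).trans (hC 0 (by simp)), fun z h0 h2 => hC z ⟨h0, h2⟩⟩

/-- Truncated kernel. -/
noncomputable def ff (P q : ℝ[X]) (c σ : ℝ) : E3 → ℝ :=
  ann.indicator (fun y => GG P q σ (ZZ (pole c) y))

theorem ff_bound (P q : ℝ[X]) : ∃ C, 0 ≤ C ∧ ∀ c : ℝ, c ^ 2 = 1 → ∀ σ, 0 ≤ σ → σ ≤ 1 →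
    ∀ y : E3, y 0 ≠ 0 → |ff P q c σ y| ≤ C * DD y := by
  obtain ⟨C1, h10, h1⟩ := poly_bound P
  obtain ⟨C2, h20, h2⟩ := poly_bound q
  refine ⟨C1 + C2, by positivity, fun c hc σ hσ hσ1 y hy0 => ?_⟩
  by_cases hy : y ∈ ann
  · simp only [ff, DD, indicator_of_mem hy, GG]
    have hb := log_bound hc hy hy0 hσ hσ1
    have hz0 := ZZ_nonneg (pole c) y
    have hz2 := ZZ_le (pole c) y
    have ha := abs_nonneg (Real.log (y 0))
    calc _ ≤ |eval (ZZ (pole c) y) P * Real.log (ZZ (pole c) y + σ)| + |eval (ZZ (pole c) y) q| :=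
          abs_add_le _ _
      _ ≤ C1 * (7 + 2 * |Real.log (y 0)|) + C2 * (7 + 2 * |Real.log (y 0)|) := by
          rw [abs_mul]
          refine add_le_add (mul_le_mul (h1 _ hz0 hz2) hb (abs_nonneg _) h10) ?_
          refine (h2 _ hz0 hz2).trans ?_
          nlinarith
      _ = _ := by ring
  · simp [ff, DD, indicator_of_notMem hy]

theorem ff_meas (P q : ℝ[X]) (c σ : ℝ) : Measurable (ff P q c σ) := by
  refine Measurable.indicator ?_ ann_compact.measurableSet
  have hz := ZZ_meas (pole c)
  simp only [GG]
  exact ((P.continuous.measurable.comp hz).mul (Real.measurable_log.comp (hz.add_const σ))).add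
    (q.continuous.measurable.comp hz)

theorem ff_loc (P q : ℝ[X]) {c σ : ℝ} (hc : c ^ 2 = 1) (hσ : 0 ≤ σ) (hσ1 : σ ≤ 1) :
    LocallyIntegrable (ff P q c σ) volume := by
  obtain ⟨C, _, h⟩ := ff_bound P q
  refine Integrable.locallyIntegrable ?_
  refine (DD_integrable.const_mul C).mono' (ff_meas P q c σ).aestronglyMeasurable ?_
  filter_upwards [ae_ne] with y hy
  exact h c hc σ hσ hσ1 y hy

/-- The regularised potential. -/
noncomputable def Uf (P q : ℝ[X]) (Q : E3 → ℝ) (σ : ℝ) (x : E3) : ℝ :=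
  ∫ y, GG P q σ (ZZ x y) * Q y

theorem Uf_eq (P q : ℝ[X]) {Q : E3 → ℝ} (hQ0 : ∀ y, y ∉ ann → Q y = 0) {c : ℝ}
    (hc : c ^ 2 = 1) (σ : ℝ) {x : E3} (hx : x ∈ UU (pole c)) :
    Uf P q Q σ x = ∫ y, ff P q c σ y * Q (RR (pole c) x y) := by
  rw [Uf, RR_change (pole_norm hc) hx.1]
  refine integral_congr_ae (Eventually.of_forall fun y => ?_)
  by_cases hy : y ∈ ann
  · simp only [ff, indicator_of_mem hy]
  · have : RR (pole c) x y ∉ ann := by simpa [ann] using hy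
    simp only [hQ0 _ this, mul_zero]

theorem ff_lim (P q : ℝ[X]) {c : ℝ} (hc : c ^ 2 = 1) {s : Set E3} (hs : IsOpen s)
    {F : E3 → E3 → ℝ} (hF : PF s ann F) {x : E3} (hx : x ∈ s) :
    Tendsto (fun σ => ∫ y, ff P q c σ y * F x y) (𝓝[>] 0) (𝓝 (∫ y, ff P q c 0 y * F x y)) := by
  obtain ⟨C, hC0, h⟩ := ff_bound P q
  have hc1 : Continuous (F x) := by
    refine continuous_iff_continuousAt.2 fun y => ?_
    exact ContinuousAt.comp (f := fun y : E3 => (x, y)) (g := fun p : E3 × E3 => F p.1 p.2)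
      (hF.at hs hx y).continuousAt (by fun_prop)
  obtain ⟨M, hM⟩ := ann_compact.exists_bound_of_continuousOn hc1.continuousOn
  have hI : ∀ᶠ σ : ℝ in 𝓝[>] 0, σ ∈ Ioc (0 : ℝ) 1 := Ioc_mem_nhdsGT one_pos
  refine tendsto_integral_filter_of_dominated_convergence (fun y => C * DD y * M) ?_ ?_
    ((DD_integrable.const_mul C).mul_const M) ?_
  · exact Eventually.of_forall fun σ =>
      ((ff_meas P q c σ).mul hc1.measurable).aestronglyMeasurable
  · filter_upwards [hI] with σ hσ
    filter_upwards [ae_ne] with y hy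
    rw [norm_mul]
    by_cases hya : y ∈ ann
    · exact mul_le_mul (h c hc σ hσ.1.le hσ.2 y hy) (hM y hya) (norm_nonneg _)
        ((abs_nonneg _).trans (h c hc σ hσ.1.le hσ.2 y hy))
    · simp [ff, DD, indicator_of_notMem hya]
  · filter_upwards [ae_ne] with y hy
    by_cases hya : y ∈ ann
    · simp only [ff, indicator_of_mem hya]
      refine Tendsto.mul_const _ ?_
      have hz := ZZ_pole_pos hc hy
      have : ContinuousAt (fun σ => GG P q σ (ZZ (pole c) y)) 0 := by
        simp only [GG]
        refine (continuousAt_const.mul (ContinuousAt.log (by fun_prop) ?_)).add continuousAt_const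
        simpa using hz.ne'
      exact this.tendsto.mono_left nhdsWithin_le_nhds
    · simp [ff, indicator_of_notMem hya]

theorem cover {x : E3} (hx : x ≠ 0) : ∃ c : ℝ, c ^ 2 = 1 ∧ x ∈ UU (pole c) := by
  rcases UU_cover (pole_norm (c := 1) (by norm_num)) hx with h | h
  · exact ⟨1, by norm_num, h⟩
  · refine ⟨-1, by norm_num, ?_⟩
    have : pole (-1) = -pole 1 := by ext i; fin_cases i <;> simp [pole]
    rwa [this]

theorem Uf_sm (P q : ℝ[X]) {Q : E3 → ℝ} (hQ : ContDiff ℝ (⊤ : ℕ∞) Q)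
    (hQ0 : ∀ y, y ∉ ann → Q y = 0) : Sm (Uf P q Q 0) := by
  refine Sm.of_at fun x hx => ?_
  obtain ⟨c, hc, hxc⟩ := cover hx
  have h := (RR_PF (pole c) hQ hQ0).contDiffOn (UU_open _) ann_compact
    (ff_loc P q hc le_rfl zero_le_one)
  have h2 := h.congr fun x hx => Uf_eq P q hQ0 hc 0 hx
  exact h2.contDiffAt ((UU_open _).mem_nhds hxc)

theorem Uf_lim (P q : ℝ[X]) {Q : E3 → ℝ} (hQ : ContDiff ℝ (⊤ : ℕ∞) Q)
    (hQ0 : ∀ y, y ∉ ann → Q y = 0) {x : E3} (hx : x ≠ 0) :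
    Tendsto (fun σ => Uf P q Q σ x) (𝓝[>] 0) (𝓝 (Uf P q Q 0 x)) ∧
    Tendsto (fun σ => Lap (Uf P q Q σ) x) (𝓝[>] 0) (𝓝 (Lap (Uf P q Q 0) x)) := by
  obtain ⟨c, hc, hxc⟩ := cover hx
  have hPF := RR_PF (pole c) hQ hQ0
  have hI : ∀ᶠ σ : ℝ in 𝓝[>] 0, σ ∈ Ioc (0 : ℝ) 1 := Ioc_mem_nhdsGT one_pos
  constructor
  · simp only [Uf_eq P q hQ0 hc _ hxc]
    exact ff_lim P q hc (UU_open _) hPF hxc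
  · have e : ∀ σ : ℝ, 0 ≤ σ → σ ≤ 1 → Lap (Uf P q Q σ) x =
        ∫ y, ff P q c σ y * Lap (fun x => Q (RR (pole c) x y)) x := by
      intro σ h0 h1
      rw [Lap_congr_open (UU_open _) (fun x hx => Uf_eq P q hQ0 hc σ hx) hxc]
      exact hPF.lap_integral (UU_open _) ann_compact (ff_loc P q hc h0 h1) hxc
    rw [e 0 le_rfl zero_le_one]
    refine (ff_lim P q hc (UU_open _) (hPF.lap (UU_open _)) hxc).congr' ?_
    filter_upwards [hI] with σ hσ
    exact (e σ hσ.1.le hσ.2).symm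
end limits

section final
open MeasureTheory Set Polynomial Filter

theorem lim_of_bound {f : ℝ → ℝ} {l A : ℝ} (hA : 0 ≤ A)
    (h : ∀ ε > 0, ∃ C, 0 ≤ C ∧ ∀ σ ∈ Ioc (0 : ℝ) 1, |f σ - l| ≤ A * ε + C * σ) :
    Tendsto f (𝓝[>] 0) (𝓝 l) := by
  rw [Metric.tendsto_nhds]
  intro η hη
  obtain ⟨C, hC, hb⟩ := h (η / (2 * (A + 1))) (by positivity)
  have h1 : ∀ᶠ σ : ℝ in 𝓝[>] 0, σ ∈ Ioc (0 : ℝ) 1 := Ioc_mem_nhdsGT one_pos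
  have h2 : ∀ᶠ σ : ℝ in 𝓝[>] 0, σ ∈ Ioo (0 : ℝ) (η / (2 * (C + 1))) :=
    Ioo_mem_nhdsGT (by positivity)
  filter_upwards [h1, h2] with σ hs1 hs2
  rw [Real.dist_eq]
  refine (hb σ hs1).trans_lt ?_
  have e1 : A * (η / (2 * (A + 1))) ≤ η / 2 := by
    rw [← mul_div_assoc, div_le_div_iff₀ (by positivity) (by norm_num)]
    nlinarith
  have e2 : C * σ < η / 2 := by
    have h3 := hs2.2
    rw [lt_div_iff₀ (by positivity)] at h3
    nlinarith [hs2.1]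
  linarith

theorem poly_contDiff (P : ℝ[X]) : ContDiff ℝ (⊤ : ℕ∞) (fun z => P.eval z) := by
  simpa [Polynomial.coe_aeval_eq_eval] using P.contDiff_aeval (𝕜 := ℝ) (⊤ : ℕ∞)

theorem unit_dist {x y : E3} (hx : x ≠ 0) (hy : y ≠ 0) :
    ‖‖y‖⁻¹ • y - ‖x‖⁻¹ • x‖ ^ 2 = 2 * ZZ x y := by
  have hx' := (norm_pos_iff.2 hx).ne'
  have hy' := (norm_pos_iff.2 hy).ne'
  rw [norm_sub_sq_real, norm_smul, norm_smul, norm_inv, norm_inv, norm_norm, norm_norm,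
    inv_mul_cancel₀ hx', inv_mul_cancel₀ hy', real_inner_smul_left, real_inner_smul_right,
    real_inner_comm, ZZ]
  field_simp
  ring

theorem near_bound {P : ℝ[X]} (hP0 : P.eval 0 = 1) {p : E3 → ℝ} (hp : Sm p) (hp0 : Hom0 p)
    {x : E3} (hx : x ≠ 0) {ε : ℝ} (hε : 0 < ε) :
    ∃ C, 0 ≤ C ∧ ∀ y ∈ ann, |P.eval (ZZ x y) * p y - p x| ≤ ε + C * ZZ x y ^ 2 := by
  obtain ⟨C1, h10, h1⟩ := poly_bound P
  have hpc : ContinuousOn p ann := fun y hy =>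
    (hp.contDiffAt (ann_ne hy)).continuousAt.continuousWithinAt
  obtain ⟨C2, h2⟩ := ann_compact.exists_bound_of_continuousOn hpc
  have hxn := norm_pos_iff.2 hx
  have hx1 : ‖x‖⁻¹ • x ≠ 0 := smul_ne_zero (inv_ne_zero hxn.ne') hx
  have hcont : ContinuousAt (fun r : ℝ × E3 => P.eval r.1 * p r.2) (0, ‖x‖⁻¹ • x) := by
    refine ContinuousAt.mul ?_ ?_
    · exact (P.continuous.comp continuous_fst).continuousAt
    · exact ContinuousAt.comp (f := fun r : ℝ × E3 => r.2) (hp.contDiffAt hx1).continuousAt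
        (by fun_prop)
  obtain ⟨η, hη, hc⟩ := Metric.continuousAt_iff.1 hcont ε hε
  set δ := min η (η ^ 2 / 2) with hδ
  have hδ0 : 0 < δ := lt_min hη (by positivity)
  set B := C1 * |C2| + |p x| with hB
  have hB0 : 0 ≤ B := by positivity
  refine ⟨B / δ ^ 2, by positivity, fun y hy => ?_⟩
  have hyn := norm_pos_iff.2 (ann_ne hy)
  have hz0 := ZZ_nonneg x y
  rcases lt_or_ge (ZZ x y) δ with hlt | hge
  · have h3 : dist (ZZ x y, ‖y‖⁻¹ • y) ((0 : ℝ), ‖x‖⁻¹ • x) < η := by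
      rw [Prod.dist_eq]
      refine max_lt ?_ ?_
      · simp only [Real.dist_eq, sub_zero]
        rw [abs_of_nonneg hz0]
        exact hlt.trans_le (min_le_left _ _)
      · simp only [dist_eq_norm]
        refine lt_of_pow_lt_pow_left₀ 2 hη.le ?_
        rw [unit_dist hx (ann_ne hy)]
        have := hlt.trans_le (min_le_right _ _)
        linarith
    have h4 := hc h3
    simp only [Real.dist_eq, hP0, one_mul] at h4
    rw [hp0 _ (inv_pos.2 hyn) y (ann_ne hy), hp0 _ (inv_pos.2 hxn) x hx] at h4
    have : 0 ≤ B / δ ^ 2 * ZZ x y ^ 2 := by positivity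
    linarith
  · have h5 : |P.eval (ZZ x y) * p y - p x| ≤ B := by
      refine (abs_sub _ _).trans ?_
      rw [abs_mul]
      refine add_le_add ?_ le_rfl
      exact mul_le_mul (h1 _ hz0 (ZZ_le x y)) ((h2 y hy).trans (le_abs_self _))
        (abs_nonneg _) h10
    have h6 : B ≤ B / δ ^ 2 * ZZ x y ^ 2 := by
      rw [div_mul_eq_mul_div, le_div_iff₀ (by positivity)]
      exact mul_le_mul_of_nonneg_left (pow_le_pow_left₀ hδ0.le hge 2) hB0
    linarith

theorem mul_cutoff {ψ p : E3 → ℝ} (hψ : ContDiff ℝ (⊤ : ℕ∞) ψ) (hψ0 : ∀ y, y ∉ ann → ψ y = 0)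
    (hp : Sm p) : ContDiff ℝ (⊤ : ℕ∞) (fun y => ψ y * p y) := by
  refine contDiff_iff_contDiffAt.2 fun y => ?_
  by_cases hy : y ∈ ann
  · exact hψ.contDiffAt.mul (hp.contDiffAt (ann_ne hy))
  · have : (fun y => ψ y * p y) =ᶠ[𝓝 y] fun _ => 0 :=
      Filter.eventually_of_mem (ann_compl_nhds hy) fun z hz => by simp [hψ0 z hz]
    exact contDiffAt_const.congr_of_eventuallyEq this

theorem ker_lim {P : ℝ[X]} (hP0 : P.eval 0 = 1) {p : E3 → ℝ} (hp : Sm p) (hp0 : Hom0 p)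
    {ψ : E3 → ℝ} (hψ : ContDiff ℝ (⊤ : ℕ∞) ψ) (hψ0 : ∀ y, y ∉ ann → ψ y = 0)
    (hψn : ∀ y, 0 ≤ ψ y) (hrad : ∀ y y' : E3, ‖y‖ = ‖y'‖ → ψ y = ψ y') {x : E3} (hx : x ≠ 0) :
    Tendsto (fun σ : ℝ => ∫ y, (-(2 * (2 - ZZ x y) * (derivative P).eval (ZZ x y) *
        (σ / (ZZ x y + σ))) + (σ ^ 2 + 2 * σ) / (ZZ x y + σ) ^ 2 * P.eval (ZZ x y)) *
          (ψ y * p y)) (𝓝[>] 0) (𝓝 ((∫ y, ψ y) * p x)) := by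
  obtain ⟨C3, h30, h3⟩ := poly_bound (derivative P)
  have hpc : ContinuousOn p ann := fun y hy =>
    (hp.contDiffAt (ann_ne hy)).continuousAt.continuousWithinAt
  obtain ⟨C2', h2'⟩ := ann_compact.exists_bound_of_continuousOn hpc
  set C2 := |C2'| with hC2
  have h2 : ∀ y ∈ ann, |p y| ≤ C2 := fun y hy => (h2' y hy).trans (le_abs_self _)
  have h20 : 0 ≤ C2 := abs_nonneg _
  set C4 := 4 * C3 * C2 with hC4
  have h40 : 0 ≤ C4 := by positivity
  set M := ∫ y, ψ y with hM
  have hM0 : 0 ≤ M := integral_nonneg hψn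
  have hI : Integrable ψ := hψ.continuous.integrable_of_hasCompactSupport
    (HasCompactSupport.intro ann_compact hψ0)
  refine lim_of_bound (A := M * (1 + C4)) (by positivity) fun ε hε => ?_
  obtain ⟨C, hC0, hC⟩ := near_bound hP0 hp hp0 hx hε
  refine ⟨M * (3 * C + C4 / ε), by positivity, ?_⟩
  rintro σ ⟨hσ, hσ1⟩
  have hmass := mass hσ hψ hψ0 hrad hx
  have hKc : ∀ z, 0 ≤ z → ContinuousAt (fun z => (σ ^ 2 + 2 * σ) / (z + σ) ^ 2) z :=
    fun z hz => by
      refine continuousAt_const.div (by fun_prop) ?_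
      have : 0 < z + σ := by linarith
      positivity
  have hK : Integrable (fun y => (σ ^ 2 + 2 * σ) / (ZZ x y + σ) ^ 2 * ψ y) :=
    ZZ_int hx hKc hψ.continuous hψ0
  have hT : Integrable (fun y => (-(2 * (2 - ZZ x y) * (derivative P).eval (ZZ x y) *
        (σ / (ZZ x y + σ))) + (σ ^ 2 + 2 * σ) / (ZZ x y + σ) ^ 2 * P.eval (ZZ x y)) *
          (ψ y * p y)) := by
    refine ZZ_int hx (φ := fun z => (-(2 * (2 - z) * (derivative P).eval z *
        (σ / (z + σ))) + (σ ^ 2 + 2 * σ) / (z + σ) ^ 2 * P.eval z)) ?_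
        (mul_cutoff hψ hψ0 hp).continuous (fun y hy => by simp [hψ0 y hy])
    intro z hz
    have hne : z + σ ≠ 0 := by linarith
    refine ContinuousAt.add (ContinuousAt.neg (ContinuousAt.mul (ContinuousAt.mul (by fun_prop) ?_)
      (continuousAt_const.div (by fun_prop) hne))) ((hKc z hz).mul ?_)
    · exact (derivative P).continuous.continuousAt
    · exact P.continuous.continuousAt
  have e1 : M * p x = ∫ y, (σ ^ 2 + 2 * σ) / (ZZ x y + σ) ^ 2 * ψ y * p x := by
    rw [integral_mul_const, hmass]
  rw [e1, ← integral_sub hT (hK.mul_const _), ← Real.norm_eq_abs]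
  have hbi : Integrable (fun y => (ε + C4 * σ / ε) * ((σ ^ 2 + 2 * σ) / (ZZ x y + σ) ^ 2 * ψ y) +
      (3 * C * σ + C4 * ε) * ψ y) := (hK.const_mul _).add (hI.const_mul _)
  refine (norm_integral_le_of_norm_le hbi (Eventually.of_forall fun y => ?_)).trans (le_of_eq ?_)
  · by_cases hy : y ∈ ann
    · have hz0 := ZZ_nonneg x y
      have hz2 := ZZ_le x y
      have hn := hC y hy
      have hd := h3 _ hz0 hz2
      have hpy := h2 y hy
      have hψy := hψn y
      set z := ZZ x y with hz
      have hpos : 0 < z + σ := by linarith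
      set K := (σ ^ 2 + 2 * σ) / (z + σ) ^ 2 with hKdef
      set s := σ / (z + σ) with hs
      have hK0 : 0 ≤ K := by positivity
      have hs0 : 0 ≤ s := by positivity
      have k1 : K * z ^ 2 ≤ 3 * σ := by
        rw [hKdef, div_mul_eq_mul_div, div_le_iff₀ (by positivity)]
        have : z ^ 2 ≤ (z + σ) ^ 2 := pow_le_pow_left₀ hz0 (by linarith) 2
        have h5 : σ ^ 2 + 2 * σ ≤ 3 * σ := by nlinarith
        exact mul_le_mul h5 this (by positivity) (by positivity)
      have k2 : s ^ 2 ≤ σ * K := by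
        rw [hs, hKdef, div_pow, ← mul_div_assoc]
        refine div_le_div_of_nonneg_right ?_ (by positivity)
        nlinarith [sq_nonneg σ, mul_pos hσ (mul_pos hσ hσ)]
      have k3 : s ≤ ε + σ * K / ε := by
        rw [← sub_le_iff_le_add', le_div_iff₀ hε]
        nlinarith [sq_nonneg (s - ε)]
      have a1 : |K * (P.eval z * p y - p x)| ≤ K * (ε + C * z ^ 2) := by
        rw [abs_mul, abs_of_nonneg hK0]
        exact mul_le_mul_of_nonneg_left hn hK0
      have a2 : |2 * (2 - z) * (derivative P).eval z * p y| ≤ C4 := by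
        rw [abs_mul, abs_mul, hC4]
        refine mul_le_mul (mul_le_mul ?_ hd (abs_nonneg _) (by norm_num)) hpy (abs_nonneg _)
          (by positivity)
        rw [abs_of_nonneg (by linarith)]; linarith
      have a3 : |2 * (2 - z) * (derivative P).eval z * p y * s| ≤ C4 * (ε + σ * K / ε) := by
        rw [abs_mul, abs_of_nonneg hs0]
        exact mul_le_mul a2 k3 hs0 h40
      have e2 : (-(2 * (2 - z) * (derivative P).eval z * s) + K * P.eval z) * (ψ y * p y) -
          K * ψ y * p x = (K * (P.eval z * p y - p x) -
            2 * (2 - z) * (derivative P).eval z * p y * s) * ψ y := by ring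
      rw [e2, norm_mul, Real.norm_eq_abs, Real.norm_eq_abs, abs_of_nonneg hψy]
      have a4 := (abs_sub (K * (P.eval z * p y - p x))
        (2 * (2 - z) * (derivative P).eval z * p y * s)).trans (add_le_add a1 a3)
      have a5 : K * (ε + C * z ^ 2) + C4 * (ε + σ * K / ε) ≤
          (ε + C4 * σ / ε) * K + (3 * C * σ + C4 * ε) := by
        have := mul_le_mul_of_nonneg_left k1 hC0
        have e3 : K * (ε + C * z ^ 2) + C4 * (ε + σ * K / ε) =
          (ε + C4 * σ / ε) * K + C4 * ε + C * (K * z ^ 2) := by ring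
        rw [e3]; linarith
      calc _ ≤ ((ε + C4 * σ / ε) * K + (3 * C * σ + C4 * ε)) * ψ y :=
            mul_le_mul_of_nonneg_right (a4.trans a5) hψy
        _ = _ := by ring
    · simp [hψ0 y hy]
  · rw [integral_add (hK.const_mul _) (hI.const_mul _), integral_const_mul, integral_const_mul,
      hmass]
    ring

theorem exists_cutoff : ∃ ψ : E3 → ℝ, ContDiff ℝ (⊤ : ℕ∞) ψ ∧ (∀ y, y ∉ ann → ψ y = 0) ∧
    (∀ y, 0 ≤ ψ y) ∧ (∀ y y' : E3, ‖y‖ = ‖y'‖ → ψ y = ψ y') ∧ 0 < ∫ y, ψ y := by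
  let ρ : ContDiffBump (2 : ℝ) := ⟨1 / 2, 1, by norm_num, by norm_num⟩
  have hs : ContDiff ℝ (⊤ : ℕ∞) (fun y : E3 => ρ (‖y‖ ^ 2)) :=
    ρ.contDiff.comp (contDiff_norm_sq ℝ)
  have h0 : ∀ y : E3, y ∉ ann → ρ (‖y‖ ^ 2) = 0 := by
    intro y hy
    apply ρ.zero_of_le_dist
    show (1 : ℝ) ≤ dist (‖y‖ ^ 2) 2
    rw [Real.dist_eq]
    by_contra! h
    rw [abs_lt] at h
    apply hy
    have := norm_nonneg y
    constructor <;> nlinarith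
  refine ⟨fun y => ρ (‖y‖ ^ 2), hs, h0, fun y => ρ.nonneg, fun y y' h => by simp only [h], ?_⟩
  refine hs.continuous.integral_pos_of_hasCompactSupport_nonneg_nonzero
    (HasCompactSupport.intro ann_compact h0) (fun y => ρ.nonneg)
    (x := EuclideanSpace.single 0 (Real.sqrt 2)) ?_
  have : ‖(EuclideanSpace.single 0 (Real.sqrt 2) : E3)‖ ^ 2 = 2 := by
    simp
  simp only [this]
  rw [ρ.one_of_mem_closedBall (by simp [ρ.rIn_pos.le])]
  norm_num

theorem key_proof : Key := by
  intro k p hp hp0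
  obtain ⟨P, q, hP0, hP, hq⟩ := exists_legendre k
  obtain ⟨ψ, hψ, hψ0, hψn, hrad, hM⟩ := exists_cutoff
  set M := ∫ y, ψ y with hMdef
  set Q : E3 → ℝ := fun y => ψ y * p y with hQdef
  have hQ : ContDiff ℝ (⊤ : ℕ∞) Q := mul_cutoff hψ hψ0 hp
  have hQ0 : ∀ y, y ∉ ann → Q y = 0 := fun y hy => by simp [hQdef, hψ0 y hy]
  set h0 : E3 → ℝ := fun x => ∫ y, P.eval (ZZ x y) * Q y with hh0
  have hPs : ∀ z, 0 ≤ z → ContDiffAt ℝ (⊤ : ℕ∞) (fun z => P.eval z) z := fun z _ =>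
    (poly_contDiff P).contDiffAt
  have h0s : Sm h0 := ker_sm hPs hQ hQ0
  have h0h : Hom0 h0 := ker_hom (fun z => P.eval z) Q
  have h0e : ∀ x : E3, x ≠ 0 → ‖x‖ ^ 2 * Lap h0 x + (k : ℝ) * (k + 1) * h0 x = 0 := by
    intro x hx
    have e := ker_lap (g := fun z => P.eval z) (g' := fun z => (derivative P).eval z)
      (g'' := fun z => (derivative (derivative P)).eval z) one_pos hPs
      (fun z _ => P.hasDerivAt z) (fun z _ => (derivative P).hasDerivAt z) hQ hQ0 hx
    rw [e, hh0]
    simp only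
    rw [← integral_const_mul, ← integral_add]
    · rw [← integral_zero E3 ℝ]
      refine integral_congr_ae (Eventually.of_forall fun y => ?_)
      have h1 := congrArg (Polynomial.eval (ZZ x y)) hP
      simp only [eval_add, eval_mul, eval_sub, eval_X, eval_C, eval_one, eval_ofNat,
        eval_zero] at h1
      simp only
      linear_combination Q y * h1
    · exact ZZ_int hx (φ := fun z => z * (2 - z) * (derivative (derivative P)).eval z +
        2 * (1 - z) * (derivative P).eval z) (fun z _ => by fun_prop) hQ.continuous hQ0
    · exact (ZZ_int hx (φ := fun z => P.eval z) (fun z _ => by fun_prop)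
        hQ.continuous hQ0).const_mul _
  have hus : Sm (Uf P q Q 0) := Uf_sm P q hQ hQ0
  have huh : Hom0 (Uf P q Q 0) := ker_hom (GG P q 0) Q
  have hue : ∀ x : E3, x ≠ 0 → ‖x‖ ^ 2 * Lap (Uf P q Q 0) x + (k : ℝ) * (k + 1) * Uf P q Q 0 x =
      -(2 * k + 1) * h0 x + M * p x := by
    intro x hx
    obtain ⟨l1, l2⟩ := Uf_lim P q hQ hQ0 hx
    have l3 := (l2.const_mul (‖x‖ ^ 2)).add (l1.const_mul ((k : ℝ) * (k + 1)))
    have l4 := (ker_lim hP0 hp hp0 hψ hψ0 hψn hrad hx).const_add (-(2 * (k : ℝ) + 1) * h0 x)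
    refine tendsto_nhds_unique l3 (l4.congr' ?_)
    filter_upwards [self_mem_nhdsWithin] with σ hσ
    have hσ : 0 < σ := hσ
    have hGs : ∀ z, 0 ≤ z → ContDiffAt ℝ (⊤ : ℕ∞) (GG P q σ) z := fun z hz => by
      have hne : z + σ ≠ 0 := by linarith
      exact ((poly_contDiff P).contDiffAt.mul ((contDiffAt_id.add contDiffAt_const).log hne)).add
        (poly_contDiff q).contDiffAt
    have e := ker_lap (g := GG P q σ) (g' := GG1 P q σ) (g'' := GG2 P q σ) hσ hGs
      (fun z hz => GG_deriv P q (by linarith)) (fun z hz => GG1_deriv P q (by linarith)) hQ hQ0 hx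
    have i1 : Integrable (fun y => P.eval (ZZ x y) * Q y) :=
      ZZ_int hx (φ := fun z => P.eval z) (fun z _ => by fun_prop) hQ.continuous hQ0
    have i2 : Integrable (fun y => GG P q σ (ZZ x y) * Q y) :=
      ZZ_int hx (fun z hz => (hGs z hz).continuousAt) hQ.continuous hQ0
    have c1 : ∀ z : ℝ, 0 ≤ z → z + σ ≠ 0 := fun z hz => by linarith
    have i3 : Integrable (fun y => (-(2 * (2 - ZZ x y) * (derivative P).eval (ZZ x y) *
        (σ / (ZZ x y + σ))) + (σ ^ 2 + 2 * σ) / (ZZ x y + σ) ^ 2 * P.eval (ZZ x y)) * Q y) :=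
      ZZ_int hx (φ := fun z => -(2 * (2 - z) * (derivative P).eval z *
        (σ / (z + σ))) + (σ ^ 2 + 2 * σ) / (z + σ) ^ 2 * P.eval z)
        (fun z hz => by
          have := c1 z hz
          have h2 : (z + σ) ^ 2 ≠ 0 := pow_ne_zero 2 this
          fun_prop (disch := assumption)) hQ.continuous hQ0
    have i4 : Integrable (fun y => (ZZ x y * (2 - ZZ x y) * GG2 P q σ (ZZ x y) +
        2 * (1 - ZZ x y) * GG1 P q σ (ZZ x y)) * Q y) := by
      refine ((i1.const_mul (-(2 * (k : ℝ) + 1))).add i3 |>.sub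
        (i2.const_mul ((k : ℝ) * (k + 1)))).congr (Eventually.of_forall fun y => ?_)
      have hz := ZZ_nonneg x y
      have h1 := GG_ode hP hq (σ := σ) (z := ZZ x y) (by linarith)
      simp only [Pi.add_apply, Pi.sub_apply]
      linear_combination (-Q y) * h1
    have e' : ‖x‖ ^ 2 * Lap (Uf P q Q σ) x = _ := e
    rw [e', Uf, hh0]
    simp only
    rw [← integral_const_mul, ← integral_const_mul, ← integral_add i4 (i2.const_mul _),
      ← integral_add (i1.const_mul _) i3]
    refine integral_congr_ae (Eventually.of_forall fun y => ?_)
    have hz := ZZ_nonneg x y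
    have h1 := GG_ode hP hq (σ := σ) (z := ZZ x y) (by linarith)
    simp only
    linear_combination (-Q y) * h1
  refine ⟨fun x => M⁻¹ * Uf P q Q 0 x, fun x => (-(2 * (k : ℝ) + 1) / M) * h0 x,
    (Sm.const _).mul hus, (Hom0.const _).mul huh, (Sm.const _).mul h0s, (Hom0.const _).mul h0h,
    fun x hx => ?_, fun x hx => ?_⟩
  · rw [Lap_const_mul _ hus hx]
    have := hue x hx
    field_simp
    linear_combination this
  · rw [Lap_const_mul _ h0s hx]
    linear_combination (-(2 * (k : ℝ) + 1) / M) * h0e x hx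
end final

end helpers

/-- Smooth-data version of Lemma 3.6 (Meyers' potential for L_δ): given
smooth degree-0 homogeneous vector fields p̊_l, l = 0,…,ℓ, there exist smooth
degree-0 homogeneous vector fields V̊_l, l = 0,…,ℓ+2, such that
V(x) = ‖x‖^k Σ (log ‖x‖)^l V̊_l(x) satisfies
(L_δ V)^a = ‖x‖^{k−2} Σ (log ‖x‖)^l p̊_l^a(x) on ℝ³ ∖ {0}. -/
theorem stmt16 (k : ℤ) (ℓ : ℕ)
    (P : Fin (ℓ + 1) → EuclideanSpace ℝ (Fin 3) → EuclideanSpace ℝ (Fin 3))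
    (hPsmooth : ∀ l, ContDiffOn ℝ (⊤ : ℕ∞) (P l)
      {x : EuclideanSpace ℝ (Fin 3) | x ≠ 0})
    (hPhom : ∀ l, ∀ t : ℝ, 0 < t → ∀ x : EuclideanSpace ℝ (Fin 3), x ≠ 0 →
      P l (t • x) = P l x) :
    ∃ W : Fin (ℓ + 3) → EuclideanSpace ℝ (Fin 3) → EuclideanSpace ℝ (Fin 3),
      (∀ l, ContDiffOn ℝ (⊤ : ℕ∞) (W l)
        {x : EuclideanSpace ℝ (Fin 3) | x ≠ 0}) ∧
      (∀ l, ∀ t : ℝ, 0 < t → ∀ x : EuclideanSpace ℝ (Fin 3), x ≠ 0 →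
        W l (t • x) = W l x) ∧
      (∀ x : EuclideanSpace ℝ (Fin 3), x ≠ 0 → ∀ a : Fin 3,
        Ldelta (fun y => (‖y‖ ^ k) •
          ∑ l : Fin (ℓ + 3), (Real.log ‖y‖) ^ (l : ℕ) • W l y) a x =
        ‖x‖ ^ (k - 2) *
          ∑ l : Fin (ℓ + 1), (Real.log ‖x‖) ^ (l : ℕ) * P l x a) := by
  exact main_of_key key_proof k ℓ P hPsmooth hPhom
end
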